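/- arXiv:2005.11956 — 2 statements merged into one kernel-verified Lean document; each statement's English description precedes it below -/
import Mathlib

section
/- Let p_1,…,p_m ∈ ℕ with each p_i ≥ 2 and Σ_{i=1}^m 1/p_i < m−1. Then a_n(Γ_{p_1,…,p_m}) ∼ a_n(C_{p_1} * ⋯ * C_{p_m}) as n → ∞; that is, the number of index n subgroups of Γ_{p_1,…,p_m} is asymptotically equal to the number of index n subgroups of the free product C_{p_1} * ⋯ * C_{p_m}. -/
open Filter Topology Asymptotics
open scoped TensorProduct

/-- `a_n(G)`: the number of index `n` subgroups of `G`. -/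
noncomputable def subgroupCount (G : Type*) [Group G] (n : ℕ) : ℕ :=
  Nat.card {H : Subgroup G // H.index = n}

/-- the relations `x_i ^ p_i = x_j ^ p_j` defining `Γ_{p_1,…,p_m}` -/
def torusRels (m : ℕ) (p : Fin m → ℕ) : Set (FreeGroup (Fin m)) :=
  {w : FreeGroup (Fin m) | ∃ i j : Fin m, w = FreeGroup.of i ^ p i * (FreeGroup.of j ^ p j)⁻¹}

/-- the group `Γ_{p_1,…,p_m} = ⟨x_1,…,x_m ∣ x_1^{p_1} = ⋯ = x_m^{p_m}⟩` -/
abbrev TorusKnotGroup (m : ℕ) (p : Fin m → ℕ) : Type :=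
  PresentedGroup (torusRels m p)

/-- the relations `x_i ^ p_i = 1` defining `C_{p_1} * ⋯ * C_{p_m}` -/
def cyclicRels (m : ℕ) (p : Fin m → ℕ) : Set (FreeGroup (Fin m)) :=
  {w : FreeGroup (Fin m) | ∃ i : Fin m, w = FreeGroup.of i ^ p i}

/-- the free product `C_{p_1} * ⋯ * C_{p_m}` of cyclic groups of orders `p_1, …, p_m`,
presented as `⟨x_1,…,x_m ∣ x_1^{p_1} = ⋯ = x_m^{p_m} = 1⟩`. -/
abbrev CyclicFreeProduct (m : ℕ) (p : Fin m → ℕ) : Type :=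
  PresentedGroup (cyclicRels m p)

/-- number of permutations of `Fin n` with trivial `p`-th power -/
noncomputable def rootCount (p n : ℕ) : ℕ := Nat.card {τ : Equiv.Perm (Fin n) // τ ^ p = 1}

section Upper

variable {α : Type*} [Fintype α]

/-- representatives of the cycles -/
noncomputable def cycReps (τ : Equiv.Perm α) : Finset α := by
  classical
  exact Finset.univ.image (fun q : Quotient (Equiv.Perm.SameCycle.setoid τ) => q.out)

lemma cycReps_exists (τ : Equiv.Perm α) (y : α) : ∃ x ∈ cycReps τ, τ.SameCycle x y := by
  classical
  refine ⟨(Quotient.mk (Equiv.Perm.SameCycle.setoid τ) y).out, ?_, ?_⟩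
  · simp [cycReps]
  · exact Quotient.exact (Quotient.out_eq (Quotient.mk (Equiv.Perm.SameCycle.setoid τ) y))

lemma cycReps_unique (τ : Equiv.Perm α) {x y : α} (hx : x ∈ cycReps τ) (hy : y ∈ cycReps τ)
    (h : τ.SameCycle x y) : x = y := by
  classical
  simp only [cycReps, Finset.mem_image, Finset.mem_univ, true_and] at hx hy
  obtain ⟨a, rfl⟩ := hx
  obtain ⟨b, rfl⟩ := hy
  have : a = b := by
    rw [← Quotient.out_eq a, ← Quotient.out_eq b]
    exact Quotient.sound h
  rw [this]

lemma cycReps_card (τ : Equiv.Perm α) (p : ℕ) (hp : 0 < p) (h : τ ^ p = 1) :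
    Fintype.card α ≤ p * (cycReps τ).card := by
  classical
  have hs : Function.Surjective
      (fun q : Fin p × (cycReps τ) => (τ ^ (q.1 : ℕ)) (q.2 : α)) := by
    intro y
    obtain ⟨x, hx, i, hi⟩ := cycReps_exists τ y
    refine ⟨(⟨(i % p).toNat, ?_⟩, ⟨x, hx⟩), ?_⟩
    · have := Int.emod_lt_of_pos i (by exact_mod_cast hp : (0:ℤ) < p)
      have := Int.emod_nonneg i (by exact_mod_cast hp.ne' : (p:ℤ) ≠ 0)
      omega
    · have h0 := Int.emod_nonneg i (by exact_mod_cast hp.ne' : (p:ℤ) ≠ 0)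
      have : τ ^ i = τ ^ (i % p).toNat := by
        rw [← zpow_natCast, Int.toNat_of_nonneg h0]
        conv_lhs => rw [← Int.mul_ediv_add_emod i p, zpow_add, zpow_mul, zpow_natCast, h]
        simp
      simp only
      rw [← this, hi]
  have := Fintype.card_le_of_surjective _ hs
  simpa using this

lemma perm_eq_of_reps {τ τ' : Equiv.Perm α} (hN : cycReps τ = cycReps τ')
    (h : ∀ x, x ∉ cycReps τ → τ x = τ' x) : τ = τ' := by
  classical
  ext x
  by_cases hx : x ∉ cycReps τ
  · exact h x hx
  push Not at hx
  -- walk from `τ x` to `x`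
  have key : ∀ j : ℕ, ∀ y, (τ ^ j) y = x → ∃ i : ℕ, (τ' ^ i) y = x ∨
      ∃ w ∈ cycReps τ, w ≠ x ∧ τ.SameCycle w x := by
    intro j
    induction j with
    | zero => intro y hy; exact ⟨0, Or.inl (by simpa using hy)⟩
    | succ j ih =>
      intro y hy
      by_cases hyN : y ∈ cycReps τ
      · by_cases hyx : y = x
        · exact ⟨0, Or.inl (by simpa using hyx)⟩
        · exact ⟨0, Or.inr ⟨y, hyN, hyx, ⟨(j+1 : ℕ), by rw [zpow_natCast]; exact hy⟩⟩⟩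
      · have h1 : (τ ^ j) (τ y) = x := by
          rw [← hy, pow_succ]; rfl
        obtain ⟨i, hi | hi⟩ := ih (τ y) h1
        · refine ⟨i+1, Or.inl ?_⟩
          rw [pow_succ, Equiv.Perm.mul_apply, ← h y hyN]
          exact hi
        · exact ⟨i, Or.inr hi⟩
  have hfin : ∃ j : ℕ, (τ ^ j) (τ x) = x := by
    refine ⟨orderOf τ - 1, ?_⟩
    rw [← Equiv.Perm.mul_apply, ← pow_succ, Nat.sub_add_cancel (orderOf_pos τ), pow_orderOf_eq_one]
    rfl
  obtain ⟨j, hj⟩ := hfin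
  obtain ⟨i, hi | ⟨w, hw, hwx, hs⟩⟩ := key j _ hj
  · -- `τ x = τ' x'`
    obtain ⟨x', hx'⟩ := τ'.surjective (τ x)
    have hx'N : x' ∈ cycReps τ := by
      by_contra hc
      have : τ x' = τ x := by rw [h x' hc, hx']
      exact hc (by rwa [τ.injective this])
    have hsc : τ'.SameCycle x' x := by
      refine ⟨((i+1 : ℕ) : ℤ), ?_⟩
      rw [zpow_natCast, pow_succ, Equiv.Perm.mul_apply, hx']
      exact hi
    have := cycReps_unique τ' (hN ▸ hx'N) (hN ▸ hx) hsc
    rw [← hx', this]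
  · exact absurd (cycReps_unique τ hw hx hs) hwx

end Upper

lemma rootCount_le (p n : ℕ) (hp : 0 < p) (hn : 0 < n) :
    (rootCount p n : ℝ) ≤ 2 ^ n * (n : ℝ) ^ ((n : ℝ) * (1 - 1 / p)) := by
  classical
  let X := {N : Finset (Fin n) // n ≤ p * N.card}
  let f : {τ : Equiv.Perm (Fin n) // τ ^ p = 1} →
      (Σ N : X, ({x // x ∉ N.1} → Fin n)) := fun τ =>
    ⟨⟨cycReps τ.1, by simpa using cycReps_card τ.1 p hp τ.2⟩, fun x => τ.1 x⟩
  have hf : Function.Injective f := by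
    rintro ⟨τ, hτ⟩ ⟨τ', hτ'⟩ hh
    simp only [f, Sigma.mk.injEq, X, Subtype.mk.injEq] at hh
    obtain ⟨h1, h2⟩ := hh
    apply Subtype.ext
    refine perm_eq_of_reps h1 ?_
    intro x hx
    have : ∀ (A B : Finset (Fin n)) (hAB : A = B) (u : {x // x ∉ A} → Fin n)
        (v : {x // x ∉ B} → Fin n), u ≍ v → ∀ x (hx : x ∉ A), u ⟨x, hx⟩ = v ⟨x, hAB ▸ hx⟩ := by
      rintro A B rfl u v huv x hx
      rw [eq_of_heq huv]
    exact this _ _ h1 _ _ h2 x hx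
  have h1 : rootCount p n ≤ ∑ N : X, n ^ (n - N.1.card) := by
    unfold rootCount
    refine (Nat.card_le_card_of_injective f hf).trans ?_
    rw [Nat.card_eq_fintype_card, Fintype.card_sigma]
    refine Finset.sum_le_sum fun N _ => ?_
    simp
  have hn1 : (1:ℝ) ≤ n := by exact_mod_cast hn
  calc (rootCount p n : ℝ) ≤ ∑ N : X, (n:ℝ) ^ (n - N.1.card) := by exact_mod_cast h1
    _ ≤ ∑ N : X, (n : ℝ) ^ ((n : ℝ) * (1 - 1 / p)) := by
        refine Finset.sum_le_sum fun N _ => ?_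
        rw [← Real.rpow_natCast]
        refine Real.rpow_le_rpow_of_exponent_le hn1 ?_
        have hc : N.1.card ≤ n := by simpa using N.1.card_le_univ
        rw [Nat.cast_sub hc]
        have hN : (n:ℝ) ≤ p * N.1.card := by exact_mod_cast N.2
        have hp' : (0:ℝ) < p := by exact_mod_cast hp
        have : (n:ℝ) * (1 / p) ≤ N.1.card := by
          rw [mul_one_div, div_le_iff₀ hp']; linarith
        linarith
    _ = (Fintype.card X : ℝ) * (n : ℝ) ^ ((n : ℝ) * (1 - 1 / p)) := by
        simp
    _ ≤ _ := by
        gcongr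
        have : Fintype.card X ≤ Fintype.card (Finset (Fin n)) := Fintype.card_subtype_le _
        rw [Fintype.card_finset, Fintype.card_fin] at this
        exact_mod_cast this

lemma factorial_lower (n q : ℕ) : (n : ℝ) ^ q * Real.exp (-n) ≤ (q.factorial : ℝ) := by
  have h := Real.pow_div_factorial_le_exp (n:ℝ) (by positivity) q
  rw [div_le_iff₀ (by positivity)] at h
  rw [Real.exp_neg, ← div_eq_mul_inv, div_le_iff₀ (Real.exp_pos _)]
  linarith

lemma finRotate_pow_self (k : ℕ) : (finRotate (k+1)) ^ (k+1) = 1 := by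
  ext i
  have h4 : ∀ j : ℕ, ((finRotate (k+1)) ^ j) i = i + j • (1 : Fin (k+1)) := by
    intro j
    induction j with
    | zero => simp
    | succ j ih =>
      rw [pow_succ', Equiv.Perm.mul_apply, ih, finRotate_apply, succ_nsmul, add_assoc]
  have h5 : (k+1) • (1 : Fin (k+1)) = 0 := by
    have := card_nsmul_eq_zero (x := (1 : Fin (k+1)))
    simpa using this
  rw [h4, h5]; simp

lemma card_roots_lower {S : Type*} [Fintype S] (p q : ℕ) (hp : 0 < p)
    (h : q * p ≤ Fintype.card S) :
    q.factorial ^ (p - 1) ≤ Nat.card {τ : Equiv.Perm S // τ ^ p = 1} := by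
  classical
  obtain ⟨k, rfl⟩ : ∃ k, p = k + 1 := ⟨p - 1, by omega⟩
  have : Nonempty ((Fin q × Fin (k+1)) ↪ S) := by
    apply Function.Embedding.nonempty_of_card_le
    simpa using h
  obtain ⟨ι⟩ := this
  let rot : Equiv.Perm (Fin q × Fin (k+1)) := Equiv.prodCongr (Equiv.refl _) (finRotate (k+1))
  have hrot : rot ^ (k+1) = 1 := by
    have h2 : ∀ j : ℕ, ∀ x, (rot ^ j) x = (x.1, (finRotate (k+1) ^ j) x.2) := by
      intro j
      induction j with
      | zero => intro x; rfl
      | succ j ih => intro x; rw [pow_succ', Equiv.Perm.mul_apply, ih, pow_succ']; rfl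
    have h3 := finRotate_pow_self k
    ext1 x
    rw [h2, h3]; rfl
  let B : (Fin k → Equiv.Perm (Fin q)) → Equiv.Perm (Fin q × Fin (k+1)) := fun b =>
    { toFun := fun x => ((Fin.cons 1 b : Fin (k+1) → Equiv.Perm (Fin q)) x.2 x.1, x.2)
      invFun := fun x => (((Fin.cons 1 b : Fin (k+1) → Equiv.Perm (Fin q)) x.2).symm x.1, x.2)
      left_inv := fun x => by simp
      right_inv := fun x => by simp }
  let f : (Fin k → Equiv.Perm (Fin q)) → {τ : Equiv.Perm S // τ ^ (k+1) = 1} := fun b =>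
    ⟨Equiv.Perm.viaEmbeddingHom ι (B b * rot * (B b)⁻¹), by
      rw [← map_pow, conj_pow, hrot]; simp⟩
  have hf : Function.Injective f := by
    intro b b' hh
    have h1 : B b * rot * (B b)⁻¹ = B b' * rot * (B b')⁻¹ :=
      Equiv.Perm.viaEmbeddingHom_injective ι (congrArg Subtype.val hh)
    have h2 : ∀ (c : Fin k → Equiv.Perm (Fin q)) (i : Fin k) (x : Fin q),
        (B c * rot * (B c)⁻¹) (((Fin.cons 1 c : Fin (k+1) → Equiv.Perm (Fin q)) i.castSucc) x,
          i.castSucc) = (c i x, i.succ) := by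
      intro c i x
      have : (B c)⁻¹ (((Fin.cons 1 c : Fin (k+1) → Equiv.Perm (Fin q)) i.castSucc) x,
          i.castSucc) = (x, i.castSucc) := by
        rw [Equiv.Perm.inv_eq_iff_eq]; rfl
      rw [Equiv.Perm.mul_apply, Equiv.Perm.mul_apply, this]
      have h5 : rot (x, i.castSucc) = (x, i.succ) := by
        simp [rot]
      rw [h5]
      simp [B]
    have h3 : ∀ j : ℕ, ∀ hj : j < k+1, (Fin.cons 1 b : Fin (k+1) → Equiv.Perm (Fin q)) ⟨j, hj⟩ =
        (Fin.cons 1 b' : Fin (k+1) → Equiv.Perm (Fin q)) ⟨j, hj⟩ := by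
      intro j
      induction j with
      | zero => intro hj; rfl
      | succ j ih =>
        intro hj
        have hj' : j < k := by omega
        have ih' := ih (by omega)
        change b ⟨j, hj'⟩ = b' ⟨j, hj'⟩
        ext1 x
        have e1 := h2 b ⟨j, hj'⟩ x
        have e2 := h2 b' ⟨j, hj'⟩ x
        rw [← h1] at e2
        have e3 : (Fin.cons 1 b : Fin (k+1) → Equiv.Perm (Fin q)) (Fin.castSucc ⟨j, hj'⟩) =
          (Fin.cons 1 b' : Fin (k+1) → Equiv.Perm (Fin q)) (Fin.castSucc ⟨j, hj'⟩) := ih'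
        rw [← e3, e1] at e2
        exact congrArg Prod.fst e2
    funext i
    exact h3 (i+1) (by omega)
  have := Nat.card_le_card_of_injective f hf
  simpa [Nat.card_eq_fintype_card, Fintype.card_perm] using this

section Actions

/-- the stabilizer of a point under a permutation representation -/
def ptStab {G α : Type*} [Group G] (φ : G →* Equiv.Perm α) (r : α) : Subgroup G where
  carrier := {g | φ g r = r}
  one_mem' := by simp
  mul_mem' := by
    intro a b ha hb
    simp only [Set.mem_ofPred_eq] at *
    rw [map_mul, Equiv.Perm.mul_apply, hb, ha]
  inv_mem' := by
    intro a ha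
    simp only [Set.mem_ofPred_eq] at *
    rw [map_inv, Equiv.Perm.inv_eq_iff_eq, ha]

lemma mem_ptStab {G α : Type*} [Group G] (φ : G →* Equiv.Perm α) (r : α) (g : G) :
    g ∈ ptStab φ r ↔ φ g r = r := Iff.rfl

lemma ptStab_index {G α : Type*} [Group G] (φ : G →* Equiv.Perm α) (r : α)
    (h : ∀ v, ∃ g, φ g r = v) : (ptStab φ r).index = Nat.card α := by
  let : MulAction G α := MulAction.compHom α φ
  have hs : ∀ (g : G) (a : α), g • a = φ g a := fun _ _ => rfl
  have : MulAction.IsPretransitive G α := by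
    constructor
    intro x y
    obtain ⟨a, ha⟩ := h x
    obtain ⟨b, hb⟩ := h y
    refine ⟨b * a⁻¹, ?_⟩
    rw [hs, map_mul, map_inv, Equiv.Perm.mul_apply, ← hb]
    congr 1
    rw [Equiv.Perm.inv_eq_iff_eq, ha]
  have : ptStab φ r = MulAction.stabilizer G r := by
    ext g; rfl
  rw [this, MulAction.index_stabilizer_of_transitive]

variable {m : ℕ} {p : Fin m → ℕ}

/-- homomorphism from the free product defined by images of generators -/
def cycHom {G : Type*} [Group G] (x : Fin m → G) (hx : ∀ i, x i ^ p i = 1) :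
    CyclicFreeProduct m p →* G :=
  PresentedGroup.toGroup (f := x) (by
    rintro _ ⟨i, rfl⟩
    simp [hx i])

lemma cycHom_of {G : Type*} [Group G] (x : Fin m → G) (hx : ∀ i, x i ^ p i = 1) (i : Fin m) :
    cycHom (p := p) x hx (PresentedGroup.of i) = x i :=
  PresentedGroup.toGroup.of _

lemma cyc_of_pow (i : Fin m) :
    (PresentedGroup.of i : CyclicFreeProduct m p) ^ p i = 1 := by
  have : PresentedGroup.mk (cyclicRels m p) (FreeGroup.of i ^ p i) = 1 :=
    PresentedGroup.one_of_mem ⟨i, rfl⟩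
  rw [map_pow] at this
  exact this

/-- left multiplication permutation representation on cosets transported to `Fin n` -/
noncomputable def cosetRep {G : Type*} [Group G] (H : Subgroup G) {n : ℕ} (e : G ⧸ H ≃ Fin n) :
    G →* Equiv.Perm (Fin n) :=
  (e.permCongrHom : _ ≃* _).toMonoidHom.comp (MulAction.toPermHom G (G ⧸ H))

lemma cosetRep_apply {G : Type*} [Group G] (H : Subgroup G) {n : ℕ} (e : G ⧸ H ≃ Fin n) (g a : G) :
    cosetRep H e g (e (a : G ⧸ H)) = e ((g * a : G) : G ⧸ H) := by
  simp [cosetRep, Equiv.permCongrHom]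

theorem upper_inj (n : ℕ) (hn : 0 < n) : ∃ f : {H : Subgroup (CyclicFreeProduct m p) // H.index = n} ×
      Equiv.Perm (Fin n) → (∀ i, {τ : Equiv.Perm (Fin n) // τ ^ p i = 1}) × Fin n,
      Function.Injective f := by
  classical
  have he : ∀ H : {H : Subgroup (CyclicFreeProduct m p) // H.index = n},
      Nonempty ((CyclicFreeProduct m p) ⧸ H.1 ≃ Fin n) := by
    intro H
    have h1 : Nat.card ((CyclicFreeProduct m p) ⧸ H.1) = n := H.2
    have : Finite ((CyclicFreeProduct m p) ⧸ H.1) := Nat.finite_of_card_ne_zero (by omega)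
    exact ⟨Finite.equivFinOfCardEq h1⟩
  let e := fun H => (he H).some
  let e' : ∀ H : {H : Subgroup (CyclicFreeProduct m p) // H.index = n}, Equiv.Perm (Fin n) →
      ((CyclicFreeProduct m p) ⧸ H.1 ≃ Fin n) := fun H π => (e H).trans π
  refine ⟨fun q => (fun i => ⟨cosetRep q.1.1 (e' q.1 q.2) (PresentedGroup.of i), ?_⟩,
    e' q.1 q.2 ((1 : CyclicFreeProduct m p) : _ ⧸ q.1.1)), ?_⟩
  · rw [← map_pow, cyc_of_pow, map_one]
  · rintro ⟨H, π⟩ ⟨H', π'⟩ hh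
    simp only [Prod.mk.injEq] at hh
    obtain ⟨h1, h2⟩ := hh
    have h3 : cosetRep H.1 (e' H π) = cosetRep H'.1 (e' H' π') := by
      apply PresentedGroup.ext
      intro i
      exact congrArg Subtype.val (congrFun h1 i)
    have hst : ∀ (K : {H : Subgroup (CyclicFreeProduct m p) // H.index = n}) (ρ : Equiv.Perm (Fin n)),
        K.1 = ptStab (cosetRep K.1 (e' K ρ)) (e' K ρ ((1 : CyclicFreeProduct m p) : _ ⧸ K.1)) := by
      intro K ρ
      ext g
      rw [mem_ptStab, cosetRep_apply, (e' K ρ).injective.eq_iff, QuotientGroup.eq]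
      simp
    have h4 : H = H' := by
      apply Subtype.ext
      rw [hst H π, hst H' π', h3, h2]
    subst h4
    have h5 : e' H π = e' H π' := by
      ext1 x
      induction x using QuotientGroup.induction_on with
      | H g =>
        have a1 := cosetRep_apply H.1 (e' H π) g 1
        have a2 := cosetRep_apply H.1 (e' H π') g 1
        rw [← h3, ← h2, a1] at a2
        simpa using a2
    have h6 : π = π' := by
      ext1 x
      have := congrArg (fun t => t ((e H).symm x)) h5
      simpa [e'] using this
    rw [h6]

theorem finite_subgroups (n : ℕ) (hn : 0 < n) :
    Finite {H : Subgroup (CyclicFreeProduct m p) // H.index = n} := by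
  obtain ⟨f, hf⟩ := upper_inj (m := m) (p := p) n hn
  refine Finite.of_injective (fun H => f (H, 1)) ?_
  intro a b hab
  exact congrArg Prod.fst (hf hab)

theorem count_upper (n : ℕ) (hn : 0 < n) :
    subgroupCount (CyclicFreeProduct m p) n * n.factorial ≤ (∏ i, rootCount (p i) n) * n := by
  obtain ⟨f, hf⟩ := upper_inj (m := m) (p := p) n hn
  have := Nat.card_le_card_of_injective f hf
  rw [Nat.card_prod, Nat.card_prod, Nat.card_pi] at this
  simpa [subgroupCount, rootCount, Nat.card_eq_fintype_card (α := Equiv.Perm (Fin n)), Fintype.card_perm] using this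

end Actions

/-- skeleton: a transitive system of permutations with prescribed numbers of free points -/
structure Skel (m : ℕ) (p : Fin m → ℕ) (α : Type) where
  σ : Fin m → Equiv.Perm α
  F : Fin m → Finset α
  hσ : ∀ i, σ i ^ p i = 1
  hF : ∀ i, ∀ v ∈ F i, σ i v = v
  trans : ∀ S : Set α, S.Nonempty → (∀ i, ∀ v ∈ S, σ i v ∈ S) → S = Set.univ

theorem Skel.lower {m : ℕ} {p : Fin m → ℕ} {α : Type} [Fintype α] (K : Skel m p α) (r : α)
    (hp : ∀ i, 0 < p i) :
    ∏ i, ((K.F i).card / p i).factorial ^ (p i - 1) ≤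
      subgroupCount (CyclicFreeProduct m p) (Fintype.card α) := by
  classical
  have hpos : 0 < Fintype.card α := Fintype.card_pos_iff.2 ⟨r⟩
  have := finite_subgroups (m := m) (p := p) (Fintype.card α) hpos
  let Y := ∀ i, {τ : Equiv.Perm (K.F i) // τ ^ p i = 1}
  let x : Y → Fin m → Equiv.Perm α := fun τ i => K.σ i * Equiv.Perm.ofSubtype (τ i).1
  have hfix : ∀ (τ : Y) i v, v ∉ K.F i → x τ i v = K.σ i v := by
    intro τ i v hv
    simp only [x, Equiv.Perm.mul_apply]
    rw [Equiv.Perm.ofSubtype_apply_of_not_mem _ hv]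
  have hin : ∀ (τ : Y) i (v : K.F i), x τ i v = (τ i).1 v := by
    intro τ i v
    simp only [x, Equiv.Perm.mul_apply]
    rw [Equiv.Perm.ofSubtype_apply_coe, K.hF i _ ((τ i).1 v).2]
  have hx : ∀ (τ : Y) i, x τ i ^ p i = 1 := by
    intro τ i
    have hd : Equiv.Perm.Disjoint (K.σ i) (Equiv.Perm.ofSubtype (τ i).1) := by
      intro v
      by_cases hv : v ∈ K.F i
      · left; exact K.hF i v hv
      · right; exact Equiv.Perm.ofSubtype_apply_of_not_mem _ hv
    simp only [x]
    rw [hd.commute.mul_pow, K.hσ, ← map_pow, (τ i).2]; simp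
  let φ : Y → CyclicFreeProduct m p →* Equiv.Perm α := fun τ => cycHom (x τ) (hx τ)
  have hφ : ∀ τ i, φ τ (PresentedGroup.of i) = x τ i := fun τ i => cycHom_of _ _ _
  have hcommon : ∀ τ τ' : Y, ∀ v, ∃ w, φ τ w r = v ∧ φ τ' w r = v := by
    intro τ τ' v
    have : {v | ∃ w, φ τ w r = v ∧ φ τ' w r = v} = Set.univ := by
      apply K.trans
      · exact ⟨r, 1, by simp⟩
      · rintro i v ⟨w, hw, hw'⟩
        by_cases hv : v ∈ K.F i
        · rw [K.hF i v hv]; exact ⟨w, hw, hw'⟩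
        · refine ⟨PresentedGroup.of i * w, ?_, ?_⟩
          · rw [map_mul, Equiv.Perm.mul_apply, hw, hφ, hfix _ _ _ hv]
          · rw [map_mul, Equiv.Perm.mul_apply, hw', hφ, hfix _ _ _ hv]
    have h2 : v ∈ {v | ∃ w, φ τ w r = v ∧ φ τ' w r = v} := this ▸ Set.mem_univ v
    exact h2
  let f : Y → {H : Subgroup (CyclicFreeProduct m p) // H.index = Fintype.card α} := fun τ =>
    ⟨ptStab (φ τ) r, by
      rw [ptStab_index, Nat.card_eq_fintype_card]
      intro v
      obtain ⟨w, hw, -⟩ := hcommon τ τ v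
      exact ⟨w, hw⟩⟩
  have hf : Function.Injective f := by
    intro τ τ' hh
    have h1 : ptStab (φ τ) r = ptStab (φ τ') r := congrArg Subtype.val hh
    have h2 : ∀ g, φ τ g r = φ τ' g r := by
      intro g
      obtain ⟨w, hw, hw'⟩ := hcommon τ τ' (φ τ g r)
      have h3 : w⁻¹ * g ∈ ptStab (φ τ) r := by
        rw [mem_ptStab, map_mul, Equiv.Perm.mul_apply, map_inv, Equiv.Perm.inv_eq_iff_eq, hw]
      rw [h1, mem_ptStab, map_mul, Equiv.Perm.mul_apply, map_inv, Equiv.Perm.inv_eq_iff_eq, hw'] at h3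
      exact h3.symm
    have h4 : ∀ i v, x τ i v = x τ' i v := by
      intro i v
      obtain ⟨w, hw, hw'⟩ := hcommon τ τ' v
      have := h2 (PresentedGroup.of i * w)
      rwa [map_mul, map_mul, Equiv.Perm.mul_apply, Equiv.Perm.mul_apply, hw, hw', hφ, hφ] at this
    funext i
    apply Subtype.ext
    ext v
    rw [← hin, ← hin, h4]
  have hcard := Nat.card_le_card_of_injective f hf
  refine le_trans ?_ hcard
  rw [Nat.card_pi]
  refine Finset.prod_le_prod' fun i _ => ?_
  apply card_roots_lower _ _ (hp i)
  rw [Fintype.card_coe]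
  exact Nat.div_mul_le_self _ _

lemma finRotate_pow_apply (k : ℕ) (i : Fin (k+1)) (j : ℕ) :
    ((finRotate (k+1)) ^ j) i = i + j • (1 : Fin (k+1)) := by
  induction j with
  | zero => simp
  | succ j ih =>
    rw [pow_succ', Equiv.Perm.mul_apply, ih, finRotate_apply, succ_nsmul, add_assoc]

lemma exists_full_cycle (B : Type) [Fintype B] (P : ℕ) (hP : 0 < P) (hB : Fintype.card B = P) :
    ∃ c : Equiv.Perm B, c ^ P = 1 ∧
      ∀ S : Set B, S.Nonempty → (∀ v ∈ S, c v ∈ S) → S = Set.univ := by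
  obtain ⟨k, rfl⟩ : ∃ k, P = k + 1 := ⟨P - 1, by omega⟩
  let e : Fin (k+1) ≃ B := (Fintype.equivFinOfCardEq hB).symm
  refine ⟨e.permCongrHom (finRotate (k+1)), ?_, ?_⟩
  · rw [← map_pow, finRotate_pow_self, map_one]
  · rintro S ⟨v, hv⟩ hS
    have h1 : ∀ j : ℕ, e (((finRotate (k+1)) ^ j) (e.symm v)) ∈ S := by
      intro j
      induction j with
      | zero => simpa using hv
      | succ j ih =>
        have := hS _ ih
        rw [pow_succ']
        simpa [Equiv.permCongrHom] using this
    rw [Set.eq_univ_iff_forall]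
    intro w
    have h2 := h1 ((e.symm w - e.symm v : Fin (k+1)) : ℕ)
    rw [finRotate_pow_apply] at h2
    have h3 : ∀ a : Fin (k+1), (a : ℕ) • (1 : Fin (k+1)) = a := by
      have h4 : ∀ j : ℕ, ((j • (1 : Fin (k+1)) : Fin (k+1)) : ℕ) = j % (k+1) := by
        intro j
        induction j with
        | zero => simp
        | succ j ih => rw [succ_nsmul, Fin.val_add, ih, Fin.val_one', ← Nat.add_mod]
      intro a
      apply Fin.ext
      rw [h4, Nat.mod_eq_of_lt a.2]
    rw [h3] at h2
    simpa using h2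

theorem Skel.step {m : ℕ} {p : Fin m → ℕ} {α : Type} [Fintype α] (K : Skel m p α)
    (i : Fin m) (k : ℕ) (hk : 1 ≤ k) (hkp : k ≤ p i) (hkF : k ≤ (K.F i).card) :
    ∃ K' : Skel m p (α ⊕ Fin (p i - k)), ∀ j, (K'.F j).card =
      if j = i then (K.F i).card - k else (K.F j).card + (p i - k) := by
  classical
  obtain ⟨A, hAF, hA⟩ := Finset.exists_subset_card_eq hkF
  obtain ⟨c, hc, hct⟩ := exists_full_cycle (A ⊕ Fin (p i - k)) (p i) (by omega) (by
    simp [hA]; omega)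
  let ι : (A ⊕ Fin (p i - k)) ↪ (α ⊕ Fin (p i - k)) :=
    ⟨Sum.map Subtype.val id, Function.Injective.sumMap Subtype.val_injective Function.injective_id⟩
  let C : Equiv.Perm (α ⊕ Fin (p i - k)) := Equiv.Perm.viaEmbeddingHom ι c
  have hCι : ∀ x, C (ι x) = ι (c x) := fun x => Equiv.Perm.viaEmbedding_apply c ι x
  have hCn : ∀ v, v ∉ A → C (Sum.inl v) = Sum.inl v := by
    intro v hv
    apply Equiv.Perm.viaEmbedding_apply_of_notMem
    rintro ⟨x | x, hx⟩
    · apply hv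
      have : (x : α) = v := by simpa [ι] using hx
      rw [← this]; exact x.2
    · simp [ι] at hx
  let s : Fin m → Equiv.Perm (α ⊕ Fin (p i - k)) := fun j =>
    Equiv.Perm.sumCongrHom α (Fin (p i - k)) (K.σ j, 1)
  have hsl : ∀ j v, s j (Sum.inl v) = Sum.inl (K.σ j v) := fun j v => rfl
  have hsr : ∀ j v, s j (Sum.inr v) = Sum.inr v := fun j v => rfl
  have hs : ∀ j, s j ^ p j = 1 := by
    intro j
    simp only [s]
    rw [← map_pow, Prod.pow_mk, K.hσ, one_pow]
    exact map_one _
  have hfixι : ∀ x, s i (ι x) = ι x := by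
    rintro (x | x)
    · change s i (Sum.inl (x : α)) = Sum.inl (x : α)
      rw [hsl, K.hF i _ (hAF x.2)]
    · exact hsr i x
  have hd : Equiv.Perm.Disjoint (s i) C := by
    rintro (v | v)
    · by_cases hv : v ∈ A
      · left; exact hfixι (Sum.inl ⟨v, hv⟩)
      · right; exact hCn v hv
    · left; exact hsr i v
  have hC : C ^ p i = 1 := by
    simp only [C]
    rw [← map_pow, hc, map_one]
  let σ' : Fin m → Equiv.Perm (α ⊕ Fin (p i - k)) := fun j => if j = i then s i * C else s j
  have hσi : σ' i = s i * C := by simp [σ']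
  have hσj : ∀ j, j ≠ i → σ' j = s j := fun j hj => by simp [σ', hj]
  let F' : Fin m → Finset (α ⊕ Fin (p i - k)) := fun j =>
    if j = i then (K.F i \ A).map Function.Embedding.inl else (K.F j).disjSum Finset.univ
  have hA0 : A.Nonempty := by
    rw [← Finset.card_pos]; omega
  refine ⟨⟨σ', F', ?_, ?_, ?_⟩, ?_⟩
  · intro j
    by_cases hj : j = i
    · subst hj
      rw [hσi, hd.commute.mul_pow, hs, hC, one_mul]
    · rw [hσj j hj, hs]
  · intro j v hv
    by_cases hj : j = i
    · subst hj
      simp only [F', if_true, Finset.mem_map, Finset.mem_sdiff] at hv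
      obtain ⟨a, ⟨ha1, ha2⟩, rfl⟩ := hv
      rw [hσi, Equiv.Perm.mul_apply]
      change s j (C (Sum.inl a)) = Sum.inl a
      rw [hCn a ha2, hsl, K.hF j a ha1]
    · rw [hσj j hj]
      simp only [F', if_neg hj] at hv
      rcases v with v | v
      · rw [hsl, K.hF j v (by simpa using hv)]
      · exact hsr j v
  · intro S hS hcl
    -- once one point of the cycle is in S, all are
    have hcyc : ∀ x, ι x ∈ S → ∀ y, ι y ∈ S := by
      intro x hx y
      have : ι ⁻¹' S = Set.univ := by
        apply hct
        · exact ⟨x, hx⟩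
        · intro v hv
          have := hcl i _ hv
          rw [hσi, Equiv.Perm.mul_apply, hCι, hfixι] at this
          exact this
      have h2 : y ∈ ι ⁻¹' S := this ▸ Set.mem_univ y
      exact h2
    obtain ⟨a0, ha0⟩ := hA0
    have hl : ∃ v, Sum.inl v ∈ S := by
      obtain ⟨v | v, hv⟩ := hS
      · exact ⟨v, hv⟩
      · exact ⟨a0, hcyc (Sum.inr v) hv (Sum.inl ⟨a0, ha0⟩)⟩
    have hall : (Sum.inl ⁻¹' S : Set α) = Set.univ := by
      apply K.trans
      · exact hl
      · intro j v hv
        by_cases hj : j = i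
        · subst hj
          by_cases hvA : v ∈ A
          · rw [K.hF j v (hAF hvA)]; exact hv
          · have := hcl j _ hv
            rw [hσi, Equiv.Perm.mul_apply, hCn v hvA, hsl] at this
            exact this
        · have := hcl j _ hv
          rw [hσj j hj, hsl] at this
          exact this
    have hall' : ∀ v, Sum.inl v ∈ S := by
      intro v
      have h2 : v ∈ (Sum.inl ⁻¹' S : Set α) := hall ▸ Set.mem_univ v
      exact h2
    rw [Set.eq_univ_iff_forall]
    rintro (v | v)
    · exact hall' v
    · exact hcyc (Sum.inl ⟨a0, ha0⟩) (hall' a0) (Sum.inr v)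
  · intro j
    by_cases hj : j = i
    · subst hj
      simp only [F', if_true, Finset.card_map]
      rw [Finset.card_sdiff_of_subset hAF, hA]
    · simp only [F', if_neg hj]
      simp

/-- there is a skeleton on `n` points with free counts `ℓ` -/
def Good (m : ℕ) (p : Fin m → ℕ) (n : ℕ) (ℓ : Fin m → ℕ) : Prop :=
  ∃ (α : Type) (_ : Fintype α) (K : Skel m p α), Fintype.card α = n ∧ Nonempty α ∧
    ∀ j, (K.F j).card = ℓ j

/-- weighted number of free points -/
noncomputable def wt {m : ℕ} (p : Fin m → ℕ) (ℓ : Fin m → ℕ) : ℝ :=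
  ∑ j, (ℓ j : ℝ) * (1 - 1 / (p j : ℝ))

lemma Good.base (m : ℕ) (p : Fin m → ℕ) : Good m p 1 (fun _ => 1) := by
  refine ⟨Unit, inferInstance, ⟨fun _ => 1, fun _ => Finset.univ, by simp, by simp, ?_⟩, by simp,
    inferInstance, by simp⟩
  rintro S ⟨v, hv⟩ -
  rw [Set.eq_univ_iff_forall]
  intro w
  exact hv

lemma Good.step {m : ℕ} {p : Fin m → ℕ} {n : ℕ} {ℓ : Fin m → ℕ} (h : Good m p n ℓ)
    (i : Fin m) (k : ℕ) (hk : 1 ≤ k) (hkp : k ≤ p i) (hkF : k ≤ ℓ i) :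
    ∃ ℓ', Good m p (n + (p i - k)) ℓ' ∧ ℓ' i = ℓ i - k ∧ (∀ j, j ≠ i → ℓ' j = ℓ j + (p i - k)) ∧
      wt p ℓ' - ((∑ j, (1 - 1 / (p j : ℝ))) - 1) * ((n + (p i - k) : ℕ) : ℝ) =
      wt p ℓ - ((∑ j, (1 - 1 / (p j : ℝ))) - 1) * (n : ℝ) - ((k : ℝ) - 1) := by
  classical
  obtain ⟨α, _, K, hc, hne, hF⟩ := h
  obtain ⟨K', hK'⟩ := K.step i k hk hkp (by rw [hF]; exact hkF)
  refine ⟨fun j => if j = i then ℓ i - k else ℓ j + (p i - k),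
    ⟨α ⊕ Fin (p i - k), inferInstance, K', by simp [hc], inferInstance, ?_⟩, by simp, ?_, ?_⟩
  · intro j
    rw [hK' j]
    simp [hF]
  · intro j hj; simp [hj]
  · have hpi : (p i : ℝ) ≠ 0 := by
      have : p i ≠ 0 := by omega
      exact_mod_cast this
    have h1 : wt p (fun j => if j = i then ℓ i - k else ℓ j + (p i - k)) =
        ∑ j, (((ℓ j : ℝ) + ((p i : ℝ) - k)) * (1 - 1 / (p j : ℝ)) -
          if j = i then (p i : ℝ) * (1 - 1 / (p i : ℝ)) else 0) := by
      unfold wt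
      refine Finset.sum_congr rfl fun j _ => ?_
      by_cases hj : j = i
      · subst hj
        simp only [if_true]
        rw [Nat.cast_sub hkF]
        ring
      · simp only [if_neg hj]
        rw [Nat.cast_add, Nat.cast_sub hkp]
        ring
    rw [h1, Finset.sum_sub_distrib, Finset.sum_ite_eq' Finset.univ i]
    simp only [Finset.mem_univ, if_true]
    have h2 : ∑ j, ((ℓ j : ℝ) + ((p i : ℝ) - k)) * (1 - 1 / (p j : ℝ)) =
        wt p ℓ + ((p i : ℝ) - k) * ∑ j, (1 - 1 / (p j : ℝ)) := by
      unfold wt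
      rw [Finset.mul_sum, ← Finset.sum_add_distrib]
      refine Finset.sum_congr rfl fun j _ => ?_
      ring
    rw [h2, Nat.cast_add, Nat.cast_sub hkp]
    have h3 : (p i : ℝ) * (1 - 1 / (p i : ℝ)) = p i - 1 := by
      field_simp
    rw [h3]
    ring

theorem good_all {m : ℕ} {p : Fin m → ℕ} (hp : ∀ i, 2 ≤ p i) (hm : 2 ≤ m) :
    ∃ (K : ℝ) (n0 : ℕ), ∀ n ≥ n0, ∃ ℓ, Good m p n ℓ ∧
      ((∑ j, (1 - 1 / (p j : ℝ))) - 1) * (n : ℝ) - K ≤ wt p ℓ := by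
  classical
  set s := ∑ j, (1 - 1 / (p j : ℝ)) with hs
  -- `b` has maximal order
  have hne : (Finset.univ : Finset (Fin m)).Nonempty := ⟨⟨0, by omega⟩, Finset.mem_univ _⟩
  obtain ⟨b, -, hb⟩ := Finset.exists_max_image Finset.univ p hne
  obtain ⟨a, hab⟩ : ∃ a : Fin m, a ≠ b := by
    have : Nontrivial (Fin m) := Fin.nontrivial_iff_two_le.2 hm
    exact exists_ne b
  have hpa := hp a
  have hpb := hp b
  have hba : p a ≤ p b := hb a (Finset.mem_univ _)
  set P := p a with hP
  set Q := p b with hQ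
  -- periods
  have hT : ∀ T : ℕ, ∃ ℓ, Good m p (1 + T * (P + Q - 2)) ℓ ∧ ℓ a = 1 + T * (Q - 2) ∧ 1 ≤ ℓ b ∧
      wt p ℓ - (s - 1) * ((1 + T * (P + Q - 2) : ℕ) : ℝ) = 1 := by
    intro T
    induction T with
    | zero =>
      refine ⟨fun _ => 1, by simpa using Good.base m p, by simp, le_refl _, ?_⟩
      simp [wt]
      rw [hs]; simp
    | succ T ih =>
      obtain ⟨ℓ, hg, ha, hlb, hw⟩ := ih
      obtain ⟨ℓ1, hg1, h1b, h1j, hw1⟩ := hg.step b 1 le_rfl (by omega) hlb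
      obtain ⟨ℓ2, hg2, h2a, h2j, hw2⟩ := hg1.step a 1 le_rfl (by omega) (by
        rw [h1j a hab]; omega)
      have hn : 1 + T * (P + Q - 2) + (p b - 1) + (p a - 1) = 1 + (T + 1) * (P + Q - 2) := by
        rw [← hP, ← hQ, Nat.add_mul]
        omega
      rw [hn] at hg2 hw2
      refine ⟨ℓ2, hg2, ?_, ?_, ?_⟩
      · rw [h2a, h1j a hab, ha, ← hQ, Nat.add_mul]; omega
      · rw [h2j b hab.symm, h1b]; omega
      · rw [hw2, hw1, hw]; simp
  -- single points
  have hR : ∀ T r : ℕ, r * (P - 1) ≤ 1 + T * (Q - 2) →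
      ∃ ℓ, Good m p (1 + T * (P + Q - 2) + r) ℓ ∧ ℓ a = 1 + T * (Q - 2) - r * (P - 1) ∧
      wt p ℓ - (s - 1) * ((1 + T * (P + Q - 2) + r : ℕ) : ℝ) = 1 - r * ((P : ℝ) - 2) := by
    intro T r
    induction r with
    | zero =>
      intro _
      obtain ⟨ℓ, hg, ha, -, hw⟩ := hT T
      exact ⟨ℓ, by simpa using hg, by simpa using ha, by simpa using hw⟩
    | succ r ih =>
      intro hr
      rw [Nat.add_mul, one_mul] at hr
      obtain ⟨ℓ, hg, ha, hw⟩ := ih (by omega)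
      obtain ⟨ℓ1, hg1, h1a, -, hw1⟩ := hg.step a (P - 1) (by omega) (by omega) (by
        rw [ha]; omega)
      have hn : 1 + T * (P + Q - 2) + r + (p a - (P - 1)) = 1 + T * (P + Q - 2) + (r + 1) := by
        omega
      rw [hn] at hg1 hw1
      refine ⟨ℓ1, hg1, ?_, ?_⟩
      · rw [h1a, ha, Nat.add_mul]; omega
      · rw [hw1, hw, Nat.cast_sub (by omega)]; push_cast; ring
  let D := P + Q - 2
  have hD : 0 < D := by omega
  refine ⟨D * P, 1 + D * (D * P), fun n hn => ?_⟩
  let T := (n - 1) / D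
  let r := (n - 1) % D
  have hnTr : 1 + T * (P + Q - 2) + r = n := by
    have := Nat.div_add_mod (n - 1) D
    change 1 + (n-1) / D * D + (n-1) % D = n
    rw [mul_comm] at this
    omega
  have hrD : r < D := Nat.mod_lt _ hD
  have hTbig : D * P ≤ T := by
    apply (Nat.le_div_iff_mul_le hD).2
    rw [mul_comm]
    omega
  have hcond : r * (P - 1) ≤ 1 + T * (Q - 2) := by
    rcases Nat.lt_or_ge 2 Q with h2 | h2
    · calc r * (P - 1) ≤ D * P := Nat.mul_le_mul hrD.le (by omega)
        _ ≤ T := hTbig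
        _ = T * 1 := (mul_one _).symm
        _ ≤ T * (Q - 2) := Nat.mul_le_mul_left _ (by omega)
        _ ≤ _ := by omega
    · have hP2 : P = 2 := by omega
      have hr1 : r ≤ 1 := by omega
      rw [hP2]
      omega
  obtain ⟨ℓ, hg, -, hw⟩ := hR T r hcond
  rw [hnTr] at hg hw
  refine ⟨ℓ, hg, ?_⟩
  have h1 : (r : ℝ) * ((P : ℝ) - 2) ≤ D * P := by
    have : (r:ℝ) ≤ D := by exact_mod_cast hrD.le
    have h2 : (0:ℝ) ≤ (P:ℝ) - 2 := by
      have : (2:ℝ) ≤ P := by exact_mod_cast hpa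
      linarith
    exact mul_le_mul this (by linarith) h2 (by positivity)
  linarith

section Torus

variable {m : ℕ} {p : Fin m → ℕ}

lemma torus_rel (i j : Fin m) :
    (PresentedGroup.of i : TorusKnotGroup m p) ^ p i = PresentedGroup.of j ^ p j := by
  have : PresentedGroup.mk (torusRels m p) (FreeGroup.of i ^ p i) =
      PresentedGroup.mk (torusRels m p) (FreeGroup.of j ^ p j) :=
    PresentedGroup.mk_eq_mk_of_mul_inv_mem ⟨i, j, rfl⟩
  rw [map_pow, map_pow] at this
  exact this

/-- the central element -/
def zEl (m : ℕ) (p : Fin m → ℕ) (i0 : Fin m) : TorusKnotGroup m p := PresentedGroup.of i0 ^ p i0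

lemma zEl_comm (i0 : Fin m) (g : TorusKnotGroup m p) : Commute (zEl m p i0) g := by
  have : g ∈ Subgroup.centralizer {zEl m p i0} := by
    apply PresentedGroup.generated_by
    intro j
    rw [Subgroup.mem_centralizer_singleton_iff]
    have : zEl m p i0 = PresentedGroup.of j ^ p j := torus_rel i0 j
    rw [this]
    exact ((Commute.refl (PresentedGroup.of j : TorusKnotGroup m p)).pow_right (p j))
  rw [Subgroup.mem_centralizer_singleton_iff] at this
  exact this.symm

/-- the projection -/
def proj (m : ℕ) (p : Fin m → ℕ) : TorusKnotGroup m p →* CyclicFreeProduct m p :=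
  PresentedGroup.toGroup (f := fun i => PresentedGroup.of i) (by
    rintro _ ⟨i, j, rfl⟩
    simp [cyc_of_pow])

lemma proj_of (i : Fin m) : proj m p (PresentedGroup.of i) = PresentedGroup.of i :=
  PresentedGroup.toGroup.of _

lemma proj_surj : Function.Surjective (proj m p) := by
  intro x
  have : x ∈ (proj m p).range := by
    apply PresentedGroup.generated_by
    intro j
    exact ⟨PresentedGroup.of j, proj_of j⟩
  exact this

lemma proj_z (i0 : Fin m) : proj m p (zEl m p i0) = 1 := by
  unfold zEl
  rw [map_pow, proj_of, cyc_of_pow]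

lemma ker_proj_le (i0 : Fin m) : (proj m p).ker ≤ Subgroup.zpowers (zEl m p i0) := by
  have hN : (Subgroup.zpowers (zEl m p i0)).Normal := by
    constructor
    intro n hn g
    obtain ⟨k, rfl⟩ := Subgroup.mem_zpowers_iff.1 hn
    have := ((zEl_comm i0 g).zpow_left k).eq
    rw [← this]
    simp
  let ψ : CyclicFreeProduct m p →* TorusKnotGroup m p ⧸ Subgroup.zpowers (zEl m p i0) :=
    cycHom (fun i => QuotientGroup.mk' _ (PresentedGroup.of i)) (by
      intro i
      rw [← map_pow, torus_rel i i0]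
      exact (QuotientGroup.eq_one_iff _).2 (Subgroup.mem_zpowers _))
  have h1 : ψ.comp (proj m p) = QuotientGroup.mk' _ := by
    apply PresentedGroup.ext
    intro i
    rw [MonoidHom.comp_apply, proj_of]
    exact cycHom_of _ _ _
  intro g hg
  have h2 : QuotientGroup.mk' (Subgroup.zpowers (zEl m p i0)) g = 1 := by
    rw [← h1, MonoidHom.comp_apply, MonoidHom.mem_ker.1 hg, map_one]
  exact (QuotientGroup.eq_one_iff _).1 h2

lemma comap_map_of_mem (i0 : Fin m) (K : Subgroup (TorusKnotGroup m p)) (hz : zEl m p i0 ∈ K) :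
    (K.map (proj m p)).comap (proj m p) = K := by
  rw [Subgroup.comap_map_eq_self]
  refine (ker_proj_le i0).trans ?_
  rwa [Subgroup.zpowers_le]

/-- subgroup reconstructed from data -/
def recon (i0 : Fin m) {N : ℕ} (t : Fin N → TorusKnotGroup m p) (d : ℕ) (c : Fin N → Fin d) :
    Subgroup (TorusKnotGroup m p) :=
  Subgroup.closure (insert (zEl m p i0 ^ d)
    (Set.range fun j => t j * (zEl m p i0 ^ (c j : ℕ))⁻¹))

lemma schreier_gens (K : Subgroup (TorusKnotGroup m p)) (k : ℕ) (hk : 0 < k) (hK : K.index = k) :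
    ∃ t : Fin (m * k) → TorusKnotGroup m p, Subgroup.closure (Set.range t) = K := by
  classical
  have : K.FiniteIndex := ⟨by omega⟩
  let S : Finset (TorusKnotGroup m p) := Finset.univ.image (fun i : Fin m => PresentedGroup.of i)
  have hS : Subgroup.closure (S : Set (TorusKnotGroup m p)) = ⊤ := by
    simp only [S, Finset.coe_image, Finset.coe_univ, Set.image_univ]
    exact PresentedGroup.closure_range_of _
  have hSc : S.card ≤ m := Finset.card_image_le.trans (by simp)
  obtain ⟨T, hTc, hT⟩ := Subgroup.exists_finset_card_le_mul K hS
  have hTc' : T.card ≤ m * k := by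
    refine hTc.trans ?_
    rw [hK, mul_comm m k]
    exact Nat.mul_le_mul_left _ hSc
  let t : Fin (m * k) → TorusKnotGroup m p := fun j =>
    if h : (j : ℕ) < T.card then ((T.equivFin.symm ⟨j, h⟩ : T) : K) else 1
  refine ⟨t, ?_⟩
  have h2 : (Subgroup.closure (T : Set K)).map K.subtype = K := by
    rw [hT, ← MonoidHom.range_eq_map, Subgroup.range_subtype]
  apply le_antisymm
  · rw [Subgroup.closure_le]
    rintro _ ⟨j, rfl⟩
    simp only [t]
    split_ifs
    · exact SetLike.coe_mem _
    · exact one_mem _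
  · rw [← h2, MonoidHom.map_closure, Subgroup.closure_le]
    rintro _ ⟨x, hx, rfl⟩
    apply Subgroup.subset_closure
    refine ⟨⟨T.equivFin ⟨x, hx⟩, lt_of_lt_of_le (T.equivFin ⟨x, hx⟩).2 hTc'⟩, ?_⟩
    simp [t]

/-- a choice of generators -/
noncomputable def gens (K : Subgroup (TorusKnotGroup m p)) (k : ℕ) :
    Fin (m * k) → TorusKnotGroup m p := by
  classical
  exact if h : ∃ t : Fin (m * k) → TorusKnotGroup m p, Subgroup.closure (Set.range t) = K
    then h.choose else fun _ => 1

lemma gens_spec (K : Subgroup (TorusKnotGroup m p)) (k : ℕ) (hk : 0 < k) (hK : K.index = k) :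
    Subgroup.closure (Set.range (gens K k)) = K := by
  have h := schreier_gens K k hk hK
  unfold gens
  rw [dif_pos h]
  exact h.choose_spec

theorem recon_exists (i0 : Fin m) (H : Subgroup (TorusKnotGroup m p)) (n : ℕ) (hn : 0 < n)
    (hH : H.index = n) (hz : zEl m p i0 ∉ H) :
    ∃ k d : ℕ, 0 < k ∧ 2 ≤ d ∧ d * k ≤ n ∧ ∃ L : Subgroup (CyclicFreeProduct m p), L.index = k ∧
      ∃ c : Fin (m * k) → Fin d, H = recon i0 (gens (L.comap (proj m p)) k) d c := by
  classical
  set z := zEl m p i0 with hzdef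
  have hfi : H.FiniteIndex := ⟨by omega⟩
  -- `d`
  have hex : ∃ d : ℕ, 0 < d ∧ z ^ d ∈ H := by
    obtain ⟨d, hd, -, h⟩ := Subgroup.exists_pow_mem_of_index_ne_zero (H := H) (by omega) z
    exact ⟨d, hd, h⟩
  let d := Nat.find hex
  have hd0 : 0 < d := (Nat.find_spec hex).1
  have hdz : z ^ d ∈ H := (Nat.find_spec hex).2
  have hdmin : ∀ e, 0 < e → e < d → z ^ e ∉ H := by
    intro e he hed h
    exact Nat.find_min hex hed ⟨he, h⟩
  have hd2 : 2 ≤ d := by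
    by_contra hlt
    have : d = 1 := by omega
    rw [this, pow_one] at hdz
    exact hz hdz
  -- `K`
  let K : Subgroup (TorusKnotGroup m p) :=
    { carrier := {g | ∃ h ∈ H, ∃ j : ℤ, g = h * z ^ j}
      one_mem' := ⟨1, one_mem _, 0, by simp⟩
      mul_mem' := by
        rintro _ _ ⟨h, hh, j, rfl⟩ ⟨h', hh', j', rfl⟩
        refine ⟨h * h', mul_mem hh hh', j + j', ?_⟩
        rw [zpow_add]
        have := ((zEl_comm i0 h').zpow_left j).eq
        rw [← hzdef] at this
        rw [mul_assoc, ← mul_assoc (z ^ j), this]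
        group
      inv_mem' := by
        rintro _ ⟨h, hh, j, rfl⟩
        refine ⟨h⁻¹, inv_mem hh, -j, ?_⟩
        have := ((zEl_comm i0 h⁻¹).zpow_left (-j)).eq
        rw [← hzdef] at this
        rw [mul_inv_rev, ← zpow_neg, this] }
  have hHK : H ≤ K := fun h hh => ⟨h, hh, 0, by simp⟩
  have hzK : z ∈ K := ⟨1, one_mem _, 1, by simp⟩
  have hmod : ∀ j : ℤ, ∃ e : ℕ, e < d ∧ ∃ q : ℤ, z ^ j = z ^ e * (z ^ d) ^ q := by
    intro j
    have h0 : (0:ℤ) < d := by exact_mod_cast hd0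
    have h1 := Int.emod_nonneg j h0.ne'
    have h2 := Int.emod_lt_of_pos j h0
    refine ⟨(j % d).toNat, by omega, j / d, ?_⟩
    rw [← zpow_natCast z, ← zpow_natCast z, ← zpow_mul, ← zpow_add, Int.toNat_of_nonneg h1]
    congr 1
    have := Int.mul_ediv_add_emod j d
    omega
  -- index
  have hidx := Subgroup.relIndex_mul_index hHK
  have hKpos : 0 < K.index := by
    rcases Nat.eq_zero_or_pos K.index with h | h
    · rw [h, mul_zero] at hidx; omega
    · exact h
  have hrel : d ≤ H.relIndex K := by
    have hpos : H.relIndex K ≠ 0 := by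
      intro h; rw [h, zero_mul] at hidx; omega
    have hfin : Finite (K ⧸ H.subgroupOf K) := Nat.finite_of_card_ne_zero hpos
    have hinj : Function.Injective
        (fun e : Fin d => ((⟨z, hzK⟩ ^ (e : ℕ) : K) : K ⧸ H.subgroupOf K)) := by
      have key : ∀ e e' : Fin d, e < e' → ((⟨z, hzK⟩ ^ (e : ℕ) : K) : K ⧸ H.subgroupOf K) ≠
          ((⟨z, hzK⟩ ^ (e' : ℕ) : K) : K ⧸ H.subgroupOf K) := by
        intro e e' hlt heq
        rw [QuotientGroup.eq, Subgroup.mem_subgroupOf] at heq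
        have hlt' : (e : ℕ) < e' := hlt
        refine hdmin ((e' : ℕ) - e) (by omega) (by omega) ?_
        have : z ^ ((e' : ℕ) - e) = (z ^ (e : ℕ))⁻¹ * z ^ (e' : ℕ) := by
          rw [eq_inv_mul_iff_mul_eq, ← pow_add]
          congr 1
          omega
        rw [this]
        simpa using heq
      intro e e' heq
      rcases lt_trichotomy e e' with h | h | h
      · exact absurd heq (key _ _ h)
      · exact h
      · exact absurd heq.symm (key _ _ h)
    have := Nat.card_le_card_of_injective _ hinj
    rw [Nat.card_eq_fintype_card, Fintype.card_fin] at this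
    exact this
  have hL : (K.map (proj m p)).comap (proj m p) = K := comap_map_of_mem i0 K hzK
  have hLi : (K.map (proj m p)).index = K.index := by
    rw [← Subgroup.index_comap_of_surjective _ proj_surj, hL]
  refine ⟨K.index, d, hKpos, hd2, ?_, K.map (proj m p), hLi, ?_⟩
  · rw [← hH, ← hidx]
    exact Nat.mul_le_mul_right _ hrel
  rw [hL]
  have hgen := gens_spec K K.index hKpos rfl
  set t := gens K K.index
  have htK : ∀ j, t j ∈ K := by
    intro j
    rw [← hgen]
    exact Subgroup.subset_closure ⟨j, rfl⟩
  have hcex : ∀ j, ∃ e : Fin d, t j * (z ^ (e : ℕ))⁻¹ ∈ H := by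
    intro j
    obtain ⟨h, hh, i, hi⟩ := htK j
    obtain ⟨e, hed, q, hq⟩ := hmod i
    refine ⟨⟨e, hed⟩, ?_⟩
    rw [hi, hq]
    have : h * (z ^ e * (z ^ d) ^ q) * (z ^ e)⁻¹ = h * (z ^ d) ^ q := by
      have hc : Commute (z ^ e) ((z ^ d) ^ q) :=
        (((Commute.refl z).pow_left e).pow_right d).zpow_right q
      rw [hc.eq]; group
    rw [this]
    exact mul_mem hh (zpow_mem hdz q)
  choose c hc using hcex
  refine ⟨c, ?_⟩
  have hle : recon i0 t d c ≤ H := by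
    unfold recon
    rw [Subgroup.closure_le]
    rintro _ (rfl | ⟨j, rfl⟩)
    · exact hdz
    · exact hc j
  apply le_antisymm _ hle
  -- every element of K is in N * ⟨z⟩
  have hKN : ∀ g ∈ K, ∃ j : ℤ, g * z ^ j ∈ recon i0 t d c := by
    intro g hg
    rw [← hgen] at hg
    induction hg using Subgroup.closure_induction with
    | mem x hx =>
      obtain ⟨j, rfl⟩ := hx
      refine ⟨-(c j : ℕ), ?_⟩
      rw [zpow_neg, zpow_natCast]
      exact Subgroup.subset_closure (Or.inr ⟨j, rfl⟩)
    | one => exact ⟨0, by simp [one_mem]⟩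
    | mul x y _ _ hx hy =>
      obtain ⟨a, ha⟩ := hx
      obtain ⟨b, hb⟩ := hy
      refine ⟨a + b, ?_⟩
      have := ((zEl_comm i0 y).zpow_left a).eq
      rw [← hzdef] at this
      have h2 : x * y * z ^ (a + b) = (x * z ^ a) * (y * z ^ b) := by
        rw [zpow_add, mul_assoc x (z ^ a), ← mul_assoc (z ^ a), this]; group
      rw [h2]
      exact mul_mem ha hb
    | inv x _ hx =>
      obtain ⟨a, ha⟩ := hx
      refine ⟨-a, ?_⟩
      have := ((zEl_comm i0 x⁻¹).zpow_left (-a)).eq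
      rw [← hzdef] at this
      rw [← this, zpow_neg, ← mul_inv_rev]
      exact inv_mem ha
  intro h hh
  obtain ⟨j, hj⟩ := hKN h (hHK hh)
  have hzj : z ^ j ∈ H := by
    have := mul_mem (inv_mem hh) (hle hj)
    simpa using this
  obtain ⟨e, hed, q, hq⟩ := hmod j
  have he : z ^ e ∈ H := by
    have h3 : z ^ e = z ^ j * ((z ^ d) ^ q)⁻¹ := by rw [hq]; group
    rw [h3]
    exact mul_mem hzj (inv_mem (zpow_mem hdz q))
  have he0 : e = 0 := by
    by_contra hne
    exact hdmin e (by omega) hed he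
  have hzN : z ^ j ∈ recon i0 t d c := by
    have hzd : z ^ d ∈ recon i0 t d c := Subgroup.subset_closure (Set.mem_insert _ _)
    rw [hq, he0, pow_zero, one_mul]
    exact zpow_mem hzd q
  have := mul_mem hj (inv_mem hzN)
  simpa using this

/-- bounds comparing the two counts -/
theorem count_compare (i0 : Fin m) (n : ℕ) (hn : 0 < n) :
    subgroupCount (CyclicFreeProduct m p) n ≤ subgroupCount (TorusKnotGroup m p) n ∧
    subgroupCount (TorusKnotGroup m p) n ≤ subgroupCount (CyclicFreeProduct m p) n +
      ∑ k ∈ Finset.Icc 1 (n / 2), n * (2 ^ (m * n) * subgroupCount (CyclicFreeProduct m p) k) := by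
  classical
  have hfinC : ∀ k : ℕ, 0 < k → Finite {H : Subgroup (CyclicFreeProduct m p) // H.index = k} :=
    fun k hk => finite_subgroups k hk
  -- index sets
  let I : Type := Σ kd : {kd : (Fin (n/2 + 1) × Fin (n + 1)) // 0 < (kd.1 : ℕ) ∧ (kd.2 : ℕ) * kd.1 ≤ n},
    {L : Subgroup (CyclicFreeProduct m p) // L.index = (kd.1.1 : ℕ)} ×
      (Fin (m * kd.1.1) → Fin kd.1.2)
  let J := {L : Subgroup (CyclicFreeProduct m p) // L.index = n} ⊕ I
  have hfI : ∀ kd : {kd : (Fin (n/2 + 1) × Fin (n + 1)) // 0 < (kd.1 : ℕ) ∧ (kd.2 : ℕ) * kd.1 ≤ n},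
    Finite {L : Subgroup (CyclicFreeProduct m p) // L.index = (kd.1.1 : ℕ)} :=
      fun kd => hfinC _ kd.2.1
  have hIfin : Finite I := inferInstance
  have := hfinC n hn
  have hJfin : Finite J := inferInstance
  let g : J → Subgroup (TorusKnotGroup m p) := fun x => match x with
    | Sum.inl L => L.1.comap (proj m p)
    | Sum.inr ⟨kd, L, c⟩ => recon i0 (gens (L.1.comap (proj m p)) kd.1.1) kd.1.2 c
  have hsurj : ∀ H : {H : Subgroup (TorusKnotGroup m p) // H.index = n}, ∃ x : J, g x = H.1 := by
    rintro ⟨H, hH⟩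
    by_cases hz : zEl m p i0 ∈ H
    · have h1 := comap_map_of_mem i0 H hz
      refine ⟨Sum.inl ⟨H.map (proj m p), ?_⟩, h1⟩
      rw [← Subgroup.index_comap_of_surjective _ proj_surj, h1, hH]
    · obtain ⟨k, d, hk, hd, hdk, L, hL, c, hc⟩ := recon_exists i0 H n hn hH hz
      have hk2 : k ≤ n / 2 := by
        rw [Nat.le_div_iff_mul_le (by norm_num)]
        nlinarith
      have hdn : d ≤ n := by nlinarith
      exact ⟨Sum.inr ⟨⟨(⟨k, by omega⟩, ⟨d, by omega⟩), hk, hdk⟩, ⟨L, hL⟩, c⟩, hc.symm⟩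
  choose f hf using hsurj
  have hfinj : Function.Injective f := by
    intro H H' h
    apply Subtype.ext
    rw [← hf H, ← hf H', h]
  have hΓfin : Finite {H : Subgroup (TorusKnotGroup m p) // H.index = n} :=
    Finite.of_injective f hfinj
  constructor
  · refine Nat.card_le_card_of_injective
      (fun L => (⟨L.1.comap (proj m p), ?_⟩ : {H : Subgroup (TorusKnotGroup m p) // H.index = n})) ?_
    · rw [Subgroup.index_comap_of_surjective _ proj_surj, L.2]
    · intro L L' h
      apply Subtype.ext
      exact Subgroup.comap_injective proj_surj (congrArg Subtype.val h)
  · have h1 := Nat.card_le_card_of_injective f hfinj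
    refine h1.trans ?_
    rw [Nat.card_sum]
    refine Nat.add_le_add_left ?_ _
    rw [Nat.card_sigma]
    let G : ℕ × ℕ → ℕ := fun kd => 2 ^ (m * n) * subgroupCount (CyclicFreeProduct m p) kd.1
    have h2 : ∀ kd : {kd : (Fin (n/2 + 1) × Fin (n + 1)) // 0 < (kd.1 : ℕ) ∧ (kd.2 : ℕ) * kd.1 ≤ n},
        Nat.card ({L : Subgroup (CyclicFreeProduct m p) // L.index = (kd.1.1 : ℕ)} ×
          (Fin (m * kd.1.1) → Fin kd.1.2)) ≤
        if 0 < (kd.1.2 : ℕ) then G (kd.1.1, kd.1.2) else 0 := by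
      rintro ⟨⟨k, d⟩, hk, hdk⟩
      simp only at hk hdk ⊢
      rw [Nat.card_prod, Nat.card_fun]
      simp only [Nat.card_eq_fintype_card, Fintype.card_fin]
      split_ifs with hd
      · simp only [G]
        rw [mul_comm]
        refine Nat.mul_le_mul ?_ le_rfl
        calc (d : ℕ) ^ (m * (k : ℕ)) ≤ (2 ^ (d : ℕ)) ^ (m * (k : ℕ)) :=
              Nat.pow_le_pow_left (Nat.lt_two_pow_self).le _
          _ = 2 ^ (m * ((d : ℕ) * k)) := by rw [← pow_mul]; ring_nf
          _ ≤ 2 ^ (m * n) := Nat.pow_le_pow_right (by norm_num) (Nat.mul_le_mul_left _ hdk)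
      · have : (d : ℕ) = 0 := by omega
        rw [this]
        rcases Nat.eq_zero_or_pos (m * k) with h0 | h0
        · exfalso
          have : 0 < m := i0.pos
          have := Nat.mul_pos this hk
          omega
        · rw [zero_pow h0.ne', mul_zero]
    refine (Finset.sum_le_sum fun kd _ => h2 kd).trans ?_
    have h3 : ∑ kd : {kd : (Fin (n/2 + 1) × Fin (n + 1)) // 0 < (kd.1 : ℕ) ∧ (kd.2 : ℕ) * kd.1 ≤ n},
        (if 0 < (kd.1.2 : ℕ) then G (kd.1.1, kd.1.2) else 0) ≤
        ∑ kd ∈ Finset.Icc 1 (n/2) ×ˢ Finset.Icc 1 n, G kd := by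
      rw [← Finset.sum_filter]
      rw [← Finset.sum_image (s := Finset.univ.filter fun kd : {kd : (Fin (n/2 + 1) × Fin (n + 1)) // 0 < (kd.1 : ℕ) ∧ (kd.2 : ℕ) * kd.1 ≤ n} => 0 < (kd.1.2 : ℕ))
        (g := fun kd : {kd : (Fin (n/2 + 1) × Fin (n + 1)) // 0 < (kd.1 : ℕ) ∧ (kd.2 : ℕ) * kd.1 ≤ n} => ((kd.1.1 : ℕ), (kd.1.2 : ℕ))) (f := G)]
      · refine Finset.sum_le_sum_of_subset ?_
        intro x hx
        simp only [Finset.mem_image, Finset.mem_filter, Finset.mem_univ, true_and] at hx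
        obtain ⟨⟨⟨k, d⟩, hk, hdk⟩, hd, rfl⟩ := hx
        simp only [Finset.mem_product, Finset.mem_Icc]
        simp only at hk hd
        omega
      · rintro ⟨⟨k, d⟩, hk, hdk⟩ _ ⟨⟨k', d'⟩, hk', hdk'⟩ _ h
        simp only [Prod.mk.injEq] at h
        apply Subtype.ext
        exact Prod.ext (Fin.ext h.1) (Fin.ext h.2)
    refine h3.trans ?_
    rw [Finset.sum_product]
    simp [G]

end Torus

theorem lower_bound {m : ℕ} {p : Fin m → ℕ} (hp : ∀ i, 2 ≤ p i) (hm : 2 ≤ m) :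
    ∃ (K A : ℝ) (n0 : ℕ), ∀ n ≥ n0,
      (n : ℝ) ^ (((∑ j, (1 - 1 / (p j : ℝ))) - 1) * (n : ℝ) - K) * Real.exp (- A * n) ≤
        (subgroupCount (CyclicFreeProduct m p) n : ℝ) := by
  obtain ⟨K, n0, hK⟩ := good_all hp hm
  refine ⟨K + ∑ i, ((p i : ℝ) - 1), ∑ i, ((p i : ℝ) - 1), max n0 1, fun n hn => ?_⟩
  obtain ⟨ℓ, ⟨α, _, S, hα, ⟨r⟩, hF⟩, hw⟩ := hK n (le_trans (le_max_left _ _) hn)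
  have hn1 : (1:ℝ) ≤ n := by exact_mod_cast le_trans (le_max_right _ _) hn
  have hn0 : (0:ℝ) < n := by linarith
  have h1 := S.lower r (fun i => by have := hp i; omega)
  rw [hα] at h1
  simp only [hF] at h1
  have h2 : (∏ i, (((ℓ i / p i).factorial : ℝ)) ^ (p i - 1)) ≤
      (subgroupCount (CyclicFreeProduct m p) n : ℝ) := by exact_mod_cast h1
  refine le_trans ?_ h2
  have h3 : ∀ i, (n : ℝ) ^ ((ℓ i : ℝ) * (1 - 1 / (p i : ℝ)) - ((p i : ℝ) - 1)) *
      Real.exp (-((p i : ℝ) - 1) * n) ≤ (((ℓ i / p i).factorial : ℝ)) ^ (p i - 1) := by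
    intro i
    have hpi := hp i
    have hp0 : (0:ℝ) < p i := by
      have : 0 < p i := by omega
      exact_mod_cast this
    have hp1 : (((p i - 1 : ℕ)) : ℝ) = (p i : ℝ) - 1 := by
      rw [Nat.cast_sub (by omega)]; simp
    refine le_trans ?_ (pow_le_pow_left₀ (by positivity) (factorial_lower n (ℓ i / p i)) (p i - 1))
    rw [mul_pow, ← Real.exp_nat_mul, hp1, ← pow_mul, ← Real.rpow_natCast]
    have e1 : (-((p i : ℝ) - 1) * n) = ((p i : ℝ) - 1) * -(n:ℝ) := by ring
    rw [e1]
    refine mul_le_mul_of_nonneg_right ?_ (Real.exp_pos _).le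
    refine Real.rpow_le_rpow_of_exponent_le hn1 ?_
    rw [Nat.cast_mul, hp1]
    have e2 : (ℓ i : ℝ) ≤ p i * ((ℓ i / p i : ℕ) : ℝ) + p i := by
      have a1 := Nat.div_add_mod (ℓ i) (p i)
      have a2 := Nat.mod_lt (ℓ i) (show 0 < p i by omega)
      have : ℓ i ≤ p i * (ℓ i / p i) + p i := by omega
      exact_mod_cast this
    have e3 : (ℓ i : ℝ) * (1 - 1 / (p i : ℝ)) = (ℓ i : ℝ) / p i * ((p i : ℝ) - 1) := by
      field_simp
    have e4 : (ℓ i : ℝ) / p i ≤ ((ℓ i / p i : ℕ) : ℝ) + 1 := by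
      rw [div_le_iff₀ hp0]; linarith
    have e5 : (0:ℝ) ≤ (p i : ℝ) - 1 := by
      have : (2:ℝ) ≤ p i := by exact_mod_cast hpi
      linarith
    rw [e3]
    have := mul_le_mul_of_nonneg_right e4 e5
    linarith
  refine le_trans ?_ (Finset.prod_le_prod (fun i _ => by positivity) (fun i _ => h3 i))
  rw [Finset.prod_mul_distrib, ← Real.exp_sum, ← Real.rpow_sum_of_pos hn0, ← Finset.sum_mul]
  rw [Finset.sum_neg_distrib]
  refine mul_le_mul_of_nonneg_right ?_ (Real.exp_pos _).le
  refine Real.rpow_le_rpow_of_exponent_le hn1 ?_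
  have e6 : ∑ i, ((ℓ i : ℝ) * (1 - 1 / (p i : ℝ)) - ((p i : ℝ) - 1)) =
      wt p ℓ - ∑ i, ((p i : ℝ) - 1) := by
    unfold wt
    rw [← Finset.sum_sub_distrib]
  rw [e6]
  linarith

theorem upper_bound {m : ℕ} {p : Fin m → ℕ} (hp : ∀ i, 2 ≤ p i) (k : ℕ) (hk : 0 < k) :
    (subgroupCount (CyclicFreeProduct m p) k : ℝ) ≤
      k * (2 ^ (m * k) * Real.exp k) * (k : ℝ) ^ (((∑ j, (1 - 1 / (p j : ℝ))) - 1) * (k : ℝ)) := by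
  have hk0 : (0:ℝ) < k := by exact_mod_cast hk
  have h1 : (subgroupCount (CyclicFreeProduct m p) k : ℝ) * k.factorial ≤
      (∏ i, (rootCount (p i) k : ℝ)) * k := by exact_mod_cast count_upper (m := m) (p := p) k hk
  have h2 : (∏ i, (rootCount (p i) k : ℝ)) ≤
      ∏ i, (2 ^ k * (k : ℝ) ^ ((k : ℝ) * (1 - 1 / p i))) :=
    Finset.prod_le_prod (fun i _ => by positivity)
      (fun i _ => rootCount_le (p i) k (by have := hp i; omega) hk)
  rw [Finset.prod_mul_distrib, ← Real.rpow_sum_of_pos hk0, ← Finset.mul_sum] at h2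
  simp only [Finset.prod_const, Finset.card_univ, Fintype.card_fin, ← pow_mul] at h2
  set s := ∑ j, (1 - 1 / (p j : ℝ)) with hs
  have h3 := factorial_lower k k
  have h4 : (subgroupCount (CyclicFreeProduct m p) k : ℝ) * ((k : ℝ) ^ k * Real.exp (-k)) ≤
      2 ^ (k * m) * (k : ℝ) ^ ((k:ℝ) * s) * k :=
    (mul_le_mul_of_nonneg_left h3 (by positivity)).trans
      (h1.trans (mul_le_mul_of_nonneg_right h2 hk0.le))
  have h5 : (k : ℝ) ^ ((k:ℝ) * s) = (k : ℝ) ^ ((s - 1) * (k:ℝ)) * (k:ℝ) ^ k := by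
    rw [← Real.rpow_natCast (k:ℝ) k, ← Real.rpow_add hk0]
    congr 1; ring
  rw [h5, Real.exp_neg] at h4
  have hkk : (0:ℝ) < (k:ℝ) ^ k := by positivity
  have hE := Real.exp_pos (k:ℝ)
  rw [← mul_le_mul_iff_left₀ (show (0:ℝ) < (k:ℝ) ^ k * (Real.exp k)⁻¹ by positivity)]
  refine h4.trans (le_of_eq ?_)
  rw [mul_comm k m]
  field_simp

theorem exp_tendsto (B A c : ℝ) (hc : 0 < c) :
    Filter.Tendsto (fun n : ℕ => Real.exp (B * Real.log n + A * n - c * n * Real.log n))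
      Filter.atTop (𝓝 0) := by
  rw [Real.tendsto_exp_comp_nhds_zero]
  have hl : Filter.Tendsto (fun n : ℕ => Real.log n) Filter.atTop Filter.atTop :=
    Real.tendsto_log_atTop.comp tendsto_natCast_atTop_atTop
  have hn : Filter.Tendsto (fun n : ℕ => (n:ℝ)) Filter.atTop Filter.atTop :=
    tendsto_natCast_atTop_atTop
  have hbig : Filter.Tendsto (fun n : ℕ => -(n:ℝ)) Filter.atTop Filter.atBot :=
    Filter.tendsto_neg_atTop_atBot.comp hn
  refine Filter.tendsto_atBot_mono' _ ?_ hbig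
  filter_upwards [hl.eventually_ge_atTop ((|B| + |A| + 1) / c), hl.eventually_ge_atTop 0,
    Filter.eventually_ge_atTop 1] with n h1 h0 hn1
  have hn1' : (1:ℝ) ≤ n := by exact_mod_cast hn1
  have h2 : Real.log n ≤ n := (Real.log_le_sub_one_of_pos (by linarith)).trans (by linarith)
  rw [div_le_iff₀ hc] at h1
  have h3 : B * Real.log n ≤ |B| * n :=
    (mul_le_mul_of_nonneg_right (le_abs_self B) h0).trans
      (mul_le_mul_of_nonneg_left h2 (abs_nonneg B))
  have h4 : A * n ≤ |A| * n := mul_le_mul_of_nonneg_right (le_abs_self A) (by linarith)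
  have h5 : (|B| + |A| + 1) * n ≤ Real.log n * c * n := mul_le_mul_of_nonneg_right h1 (by linarith)
  nlinarith

theorem subgroup_growth_comparison (m : ℕ) (p : Fin m → ℕ) (hp : ∀ i, 2 ≤ p i)
    (h : ∑ i, (1 : ℝ) / (p i : ℝ) < (m : ℝ) - 1) :
    Filter.Tendsto (fun n : ℕ =>
      (subgroupCount (TorusKnotGroup m p) n : ℝ) /
        (subgroupCount (CyclicFreeProduct m p) n : ℝ))
      Filter.atTop (𝓝 1) := by
  have hm : 2 ≤ m := by
    by_contra hlt
    have h1 : (m:ℝ) ≤ 1 := by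
      have : m ≤ 1 := by omega
      exact_mod_cast this
    have h2 : (0:ℝ) ≤ ∑ i, (1 : ℝ) / (p i : ℝ) := Finset.sum_nonneg fun i _ => by positivity
    linarith
  let i0 : Fin m := ⟨0, by omega⟩
  obtain ⟨K, A, n0, hlow⟩ := lower_bound hp hm
  set s := ∑ j, (1 - 1 / (p j : ℝ)) with hs
  have hs1 : 0 < s - 1 := by
    rw [hs, Finset.sum_sub_distrib]
    simp only [Finset.sum_const, Finset.card_univ, Fintype.card_fin, nsmul_eq_mul, mul_one]
    linarith
  have hlim := exp_tendsto (K + 3) (2 * m * Real.log 2 + 1 + A) ((s - 1) / 2) (by linarith)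
  have hmain : ∀ᶠ n : ℕ in Filter.atTop,
      1 ≤ (subgroupCount (TorusKnotGroup m p) n : ℝ) /
        (subgroupCount (CyclicFreeProduct m p) n : ℝ) ∧
      (subgroupCount (TorusKnotGroup m p) n : ℝ) /
        (subgroupCount (CyclicFreeProduct m p) n : ℝ) ≤
      1 + Real.exp ((K + 3) * Real.log n + (2 * m * Real.log 2 + 1 + A) * n
        - (s - 1) / 2 * n * Real.log n) := by
    filter_upwards [Filter.eventually_ge_atTop n0, Filter.eventually_ge_atTop 1] with n hn hn1
    have hnR : (1:ℝ) ≤ n := by exact_mod_cast hn1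
    have hn0 : (0:ℝ) < n := by linarith
    have hL := hlow n hn
    obtain ⟨hc1, hc2⟩ := count_compare (m := m) (p := p) i0 n hn1
    set a := (subgroupCount (CyclicFreeProduct m p) n : ℝ) with ha
    have hLpos : 0 < (n : ℝ) ^ ((s - 1) * (n : ℝ) - K) * Real.exp (- A * n) := by positivity
    have hapos : 0 < a := hLpos.trans_le hL
    constructor
    · rw [le_div_iff₀ hapos, one_mul, ha]
      exact_mod_cast hc1
    rw [div_le_iff₀ hapos]
    have hc2' : (subgroupCount (TorusKnotGroup m p) n : ℝ) ≤ a +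
        ∑ k ∈ Finset.Icc 1 (n / 2), n * (2 ^ (m * n) *
          (subgroupCount (CyclicFreeProduct m p) k : ℝ)) := by
      rw [ha]; exact_mod_cast hc2
    have hup : ∀ k ∈ Finset.Icc 1 (n / 2), (n:ℝ) * (2 ^ (m * n) *
          (subgroupCount (CyclicFreeProduct m p) k : ℝ)) ≤
        n * (2 ^ (m * n) * (n * (2 ^ (m * n) * Real.exp n) * (n:ℝ) ^ ((s - 1) * (n / 2)))) := by
      intro k hk
      rw [Finset.mem_Icc] at hk
      have hk2 : k * 2 ≤ n := (Nat.le_div_iff_mul_le (by norm_num)).1 hk.2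
      have hkn : k ≤ n := by omega
      have hkR : (k:ℝ) ≤ n := by exact_mod_cast hkn
      have hk2R : (k:ℝ) ≤ n / 2 := by
        have : (k:ℝ) * 2 ≤ n := by exact_mod_cast hk2
        linarith
      refine mul_le_mul_of_nonneg_left (mul_le_mul_of_nonneg_left ?_ (by positivity)) hn0.le
      refine (upper_bound hp k hk.1).trans ?_
      rw [← hs]
      have e1 : (k : ℝ) ^ ((s - 1) * (k : ℝ)) ≤ (n:ℝ) ^ ((s - 1) * (n / 2)) :=
        (Real.rpow_le_rpow (by positivity) hkR (by positivity)).trans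
          (Real.rpow_le_rpow_of_exponent_le hnR (mul_le_mul_of_nonneg_left hk2R hs1.le))
      have e2 : (2:ℝ) ^ (m * k) ≤ 2 ^ (m * n) :=
        pow_le_pow_right₀ (by norm_num) (Nat.mul_le_mul_left _ hkn)
      have e3 : Real.exp k ≤ Real.exp n := Real.exp_le_exp.2 hkR
      gcongr
    have hsum := Finset.sum_le_sum hup
    rw [Finset.sum_const, nsmul_eq_mul, Nat.card_Icc] at hsum
    set E := (n:ℝ) * (2 ^ (m * n) * (n * (2 ^ (m * n) * Real.exp n) * (n:ℝ) ^ ((s - 1) * (n / 2))))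
      with hE
    have hE0 : 0 ≤ E := by positivity
    have hcard : ((n / 2 + 1 - 1 : ℕ) : ℝ) ≤ n := by
      have : n / 2 + 1 - 1 ≤ n := by omega
      exact_mod_cast this
    have hsum2 := hsum.trans (mul_le_mul_of_nonneg_right hcard hE0)
    have hfin : (n:ℝ) * E ≤ Real.exp ((K + 3) * Real.log n + (2 * m * Real.log 2 + 1 + A) * n
        - (s - 1) / 2 * n * Real.log n) *
        ((n : ℝ) ^ ((s - 1) * (n : ℝ) - K) * Real.exp (- A * n)) := by
      apply le_of_eq
      have g1 : (n:ℝ) = Real.exp (Real.log n) := (Real.exp_log hn0).symm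
      have g2 : (2:ℝ) ^ (m * n) = Real.exp (m * n * Real.log 2) := by
        rw [← Real.rpow_natCast, Real.rpow_def_of_pos (by norm_num)]
        congr 1; push_cast; ring
      have g3 : ∀ y : ℝ, (n:ℝ) ^ y = Real.exp (Real.log n * y) := fun y =>
        Real.rpow_def_of_pos hn0 y
      have g4 : (n:ℝ) * E = Real.exp (Real.log n) * (Real.exp (Real.log n) *
          (Real.exp (m * n * Real.log 2) * (Real.exp (Real.log n) *
          (Real.exp (m * n * Real.log 2) * Real.exp n) *
          Real.exp (Real.log n * ((s - 1) * (n / 2)))))) := by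
        rw [hE, g2, g3, Real.exp_log hn0]
      rw [g4, g3]
      simp only [← Real.exp_add]
      congr 1
      ring
    have hfin2 := hfin.trans (mul_le_mul_of_nonneg_left hL (Real.exp_pos _).le)
    linarith
  refine tendsto_of_tendsto_of_tendsto_of_le_of_le' tendsto_const_nhds
    (by simpa using hlim.const_add 1) (hmain.mono fun n hn => hn.1) (hmain.mono fun n hn => hn.2)
end

section
/- Let p_1,…,p_m ∈ ℕ with each p_i ≥ 2 and Σ_{i=1}^m 1/p_i < m−1. Then h_n(Γ_{p_1,…,p_m}) ∼ t_n(Γ_{p_1,…,p_m}) as n → ∞; that is, the proportion of homomorphisms Γ_{p_1,…,p_m} → S_n whose image acts transitively on {1,…,n} tends to 1. -/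
open Filter Topology Asymptotics
open scoped TensorProduct

/-- `t_n(G)`: the number of homomorphisms `G → S_n` whose image acts transitively -/
noncomputable def transitiveHomCount (G : Type*) [Group G] (n : ℕ) : ℕ :=
  Nat.card {φ : G →* Equiv.Perm (Fin n) // ∀ x y : Fin n, ∃ g : G, φ g x = y}

namespace TK
open Equiv

/-- number of solutions of `x ^ p = 1` in `S_n` -/
noncomputable def wc (p n : ℕ) : ℕ := Nat.card {x : Perm (Fin n) // x ^ p = 1}

lemma wc_eq (p : ℕ) (α : Type) [Finite α] :
    Nat.card {x : Perm α // x ^ p = 1} = wc p (Nat.card α) := by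
  unfold wc
  have e : α ≃ Fin (Nat.card α) := Finite.equivFin α
  refine Nat.card_congr ?_
  refine Equiv.subtypeEquiv e.permCongrHom.toEquiv ?_
  intro x
  have : (e.permCongrHom x) ^ p = 1 ↔ x ^ p = 1 := by
    rw [← map_pow]
    exact map_eq_one_iff _ (MulEquiv.injective _)
  exact this.symm

open Classical in
lemma count_ext (p : ℕ) (α ι : Type) [Fintype α] [Fintype ι] (σ : Perm ι) (hσ : σ ^ p = 1)
    (e : ι ↪ α) :
    Nat.card {x : {x : Perm α // x ^ p = 1} // ∀ i, x.1 (e i) = e (σ i)}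
      = wc p (Fintype.card α - Fintype.card ι) := by
  set P : α → Prop := fun a => a ∈ Set.range e with hP
  have hc : Nat.card {a // ¬ P a} = Fintype.card α - Fintype.card ι := by
    rw [Nat.card_eq_fintype_card, Fintype.card_subtype_compl]
    congr 1
    exact (Fintype.card_congr (Equiv.ofInjective e e.injective)).symm
  rw [← hc, ← wc_eq]
  set E : ι ≃ {a // P a} := Equiv.ofInjective e e.injective with hE
  set s : Perm {a // P a} := E.permCongrHom σ with hs
  have hs1 : s ^ p = 1 := by rw [hs, ← map_pow, hσ, map_one]
  have hse : ∀ i, s ⟨e i, ⟨i, rfl⟩⟩ = ⟨e (σ i), ⟨σ i, rfl⟩⟩ := by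
    intro i
    have : (⟨e i, ⟨i, rfl⟩⟩ : {a // P a}) = E i := rfl
    rw [this, hs]
    simp [Equiv.permCongrHom, Equiv.permCongr_apply]
    rfl
  symm
  refine Nat.card_congr (Equiv.ofBijective
    (fun y : {y : Perm {a // ¬ P a} // y ^ p = 1} =>
      ⟨⟨Perm.subtypeCongrHom P (s, y.1), ?_⟩, ?_⟩) ⟨?_, ?_⟩)
  · rw [← map_pow, Prod.pow_mk, hs1, y.2]; exact map_one _
  · intro i
    change Perm.subtypeCongr s y.1 (e i) = _
    rw [Perm.subtypeCongr.left_apply s y.1 (a := e i) ⟨i, rfl⟩, hse]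
  · intro y y' h
    have h1 := congrArg (fun t => t.1.1) h
    have := Perm.subtypeCongrHom_injective P h1
    exact Subtype.ext (Prod.ext_iff.1 this).2
  · rintro ⟨⟨x, hx⟩, hxe⟩
    have hm : ∀ a, P a → P (x a) := by
      rintro _ ⟨i, rfl⟩
      exact ⟨σ i, (hxe i).symm⟩
    have hm' : ∀ a, P (x a) → P a := by
      rintro a ⟨i, hi⟩
      refine ⟨σ.symm i, ?_⟩
      have := hxe (σ.symm i)
      rw [Equiv.apply_symm_apply, hi] at this
      exact x.injective this
    have hm2 : ∀ a, ¬ P (x a) ↔ ¬ P a := fun a => not_congr ⟨hm' a, hm a⟩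
    refine ⟨⟨x.subtypePerm hm2, ?_⟩, ?_⟩
    · rw [Perm.subtypePerm_pow]
      ext a
      simp [hx]
    · apply Subtype.ext; apply Subtype.ext
      change Perm.subtypeCongr s _ = x
      ext a
      by_cases ha : P a
      · rw [Perm.subtypeCongr.left_apply _ _ ha]
        obtain ⟨i, rfl⟩ := ha
        rw [hse, hxe]
      · rw [Perm.subtypeCongr.right_apply _ _ ha]
        rfl

open Classical in
lemma double_count (p : ℕ) (α ι : Type) [Fintype α] [Fintype ι] (σ : Perm ι) (hσ : σ ^ p = 1) :
    ∑ x : {x : Perm α // x ^ p = 1}, Nat.card {e : ι ↪ α // ∀ i, x.1 (e i) = e (σ i)}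
      = (Fintype.card α).descFactorial (Fintype.card ι) *
        wc p (Fintype.card α - Fintype.card ι) := by
  have h := Finset.sum_card_bipartiteAbove_eq_sum_card_bipartiteBelow
    (s := (Finset.univ : Finset {x : Perm α // x ^ p = 1})) (t := (Finset.univ : Finset (ι ↪ α)))
    (fun x e => ∀ i, x.1 (e i) = e (σ i))
  have h1 : ∀ x : {x : Perm α // x ^ p = 1},
      Nat.card {e : ι ↪ α // ∀ i, x.1 (e i) = e (σ i)} =
      (Finset.bipartiteAbove (fun (x : {x : Perm α // x ^ p = 1}) (e : ι ↪ α) =>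
        ∀ i, x.1 (e i) = e (σ i)) Finset.univ x).card := by
    intro x
    rw [Nat.card_eq_fintype_card, Fintype.card_subtype]; rfl
  rw [Finset.sum_congr rfl (fun x _ => h1 x), h]
  have h2 : ∀ e : ι ↪ α, (Finset.bipartiteBelow (fun (x : {x : Perm α // x ^ p = 1}) (e : ι ↪ α) =>
        ∀ i, x.1 (e i) = e (σ i)) Finset.univ e).card =
        wc p (Fintype.card α - Fintype.card ι) := by
    intro e
    rw [← count_ext p α ι σ hσ e, Nat.card_eq_fintype_card, Fintype.card_subtype]; rfl
  rw [Finset.sum_congr rfl (fun x _ => h2 x)]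
  simp [Fintype.card_embedding_eq]

/-- `E[(f)_d]`-type quantity -/
noncomputable def qc (p n d : ℕ) : ℕ := n.descFactorial d * wc p (n - d)

open Classical in
lemma moment (p d : ℕ) (α : Type) [Fintype α] :
    qc p (Fintype.card α) d = ∑ x : {x : Perm α // x ^ p = 1},
      (Nat.card {a : α // x.1 a = a}).descFactorial d := by
  have := double_count p α (Fin d) 1 (one_pow _)
  simp only [Fintype.card_fin] at this
  rw [qc, ← this]
  refine Finset.sum_congr rfl fun x _ => ?_
  have h := Fintype.card_embedding_eq (α := Fin d) (β := {a : α // x.1 a = a})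
  rw [Fintype.card_fin] at h
  rw [Nat.card_eq_fintype_card (α := {a : α // x.1 a = a}), ← h, ← Nat.card_eq_fintype_card]
  refine Nat.card_congr
    { toFun := fun e => ⟨fun i => ⟨e.1 i, by simpa using e.2 i⟩, fun i j hij => e.1.injective (by simpa using hij)⟩
      invFun := fun e => ⟨⟨fun i => (e i).1, fun i j hij => e.injective (Subtype.ext hij)⟩, fun i => (e i).2⟩
      left_inv := fun e => by ext; rfl
      right_inv := fun e => by ext; rfl }

lemma card_cycles (α : Type) (d : ℕ) [NeZero d] (x : Perm α) :
    Nat.card {e : ZMod d ↪ α // ∀ i, x (e i) = e (Equiv.addRight (1 : ZMod d) i)}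
      = Nat.card {a : α // Function.minimalPeriod x a = d} := by
  have key : ∀ e : ZMod d ↪ α, (∀ i, x (e i) = e (i + 1)) → ∀ k : ℕ,
      x^[k] (e 0) = e (k : ZMod d) := by
    intro e he k
    induction k with
    | zero => simp
    | succ k ih => rw [Function.iterate_succ_apply', ih, he]; push_cast; rfl
  refine Nat.card_congr (Equiv.ofBijective (fun e => ⟨e.1 0, ?_⟩) ⟨?_, ?_⟩)
  · have he := key e.1 e.2
    apply Nat.dvd_antisymm
    · apply Function.IsPeriodicPt.minimalPeriod_dvd
      change x^[d] (e.1 0) = e.1 0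
      rw [he]; simp
    · rw [← ZMod.natCast_eq_zero_iff]
      have := he (Function.minimalPeriod x (e.1 0))
      rw [Function.iterate_minimalPeriod] at this
      exact (e.1.injective this).symm
  · intro e e' h
    have h0 : e.1 0 = e'.1 0 := congrArg Subtype.val h
    apply Subtype.ext
    ext i
    have h1 := key e.1 e.2 i.val
    have h2 := key e'.1 e'.2 i.val
    rw [h0, h2] at h1
    simp only [ZMod.natCast_val, ZMod.cast_id', id] at h1
    rw [h1]
  · rintro ⟨a, ha⟩
    refine ⟨⟨⟨fun i => x^[i.val] a, ?_⟩, ?_⟩, ?_⟩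
    · intro i j hij
      have := (Function.iterate_eq_iterate_iff_of_lt_minimalPeriod (f := x) (x := a)
        (by rw [ha]; exact i.val_lt) (by rw [ha]; exact j.val_lt)).1 hij
      exact ZMod.val_injective d this
    · intro i
      change x (x^[i.val] a) = x^[(i+1).val] a
      rw [← Function.iterate_succ_apply' (⇑x), ZMod.val_add,
        ← Function.iterate_mod_minimalPeriod_eq (f := x) (x := a), ha]
      congr 1
      rw [ZMod.val_one_eq_one_mod]
      simp [Nat.succ_eq_add_one]
    · apply Subtype.ext
      change x^[(0 : ZMod d).val] a = a
      simp

open Classical in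
lemma recursion' (p : ℕ) (hp : 0 < p) (α : Type) [Fintype α] :
    Fintype.card α * wc p (Fintype.card α) = ∑ d ∈ p.divisors, qc p (Fintype.card α) d := by
  have h1 : ∀ d ∈ p.divisors, qc p (Fintype.card α) d = ∑ x : {x : Perm (α) // x ^ p = 1},
      (Finset.univ.filter fun a : α => Function.minimalPeriod x.1 a = d).card := by
    intro d hd
    have hd' : d ∣ p := Nat.dvd_of_mem_divisors hd
    have : NeZero d := ⟨(Nat.pos_of_mem_divisors hd).ne'⟩
    have := double_count p α (ZMod d) (Equiv.addRight 1) (by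
      have hk : ∀ k : ℕ, ∀ i : ZMod d, ((Equiv.addRight (1 : ZMod d)) ^ k) i = i + k := by
        intro k
        induction k with
        | zero => simp
        | succ k ih => intro i; rw [pow_succ', Perm.mul_apply, ih]; simp [add_assoc]
      apply Equiv.ext
      intro i
      rw [hk, (ZMod.natCast_eq_zero_iff p d).2 hd']
      simp)
    simp only [ZMod.card] at this
    rw [qc, ← this]
    refine Finset.sum_congr rfl fun x _ => ?_
    rw [card_cycles, Nat.card_eq_fintype_card, Fintype.card_subtype]
  rw [Finset.sum_congr rfl h1, Finset.sum_comm]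
  have h2 : ∀ x : {x : Perm (α) // x ^ p = 1}, ∑ d ∈ p.divisors,
      (Finset.univ.filter fun a : α => Function.minimalPeriod x.1 a = d).card = Fintype.card α := by
    intro x
    rw [← Finset.card_eq_sum_card_fiberwise]
    · simp
    · intro a _
      simp only [Finset.mem_coe, Nat.mem_divisors]
      refine ⟨Function.IsPeriodicPt.minimalPeriod_dvd ?_, hp.ne'⟩
      change (x.1)^[p] a = a
      rw [← Perm.coe_pow, x.2]; rfl
  rw [Finset.sum_congr rfl (fun x _ => h2 x)]
  have h3 := wc_eq p α
  rw [Nat.card_eq_fintype_card, Nat.card_eq_fintype_card] at h3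
  simp [← h3, mul_comm]

lemma recursion (p n : ℕ) (hp : 0 < p) : n * wc p n = ∑ d ∈ p.divisors, qc p n d := by
  simpa using recursion' p hp (Fin n)

end TK
namespace TK
open Equiv

lemma wc_pos (p n : ℕ) : 0 < wc p n := by
  unfold wc
  have : Nonempty {x : Perm (Fin n) // x ^ p = 1} := ⟨⟨1, one_pow _⟩⟩
  exact Nat.card_pos

lemma pow_le_desc (p f : ℕ) : f ^ p ≤ p ^ p * (1 + f.descFactorial p) := by
  rcases lt_or_ge f p with h | h
  · calc f ^ p ≤ p ^ p := Nat.pow_le_pow_left h.le _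
      _ ≤ _ := Nat.le_mul_of_pos_right _ (by omega)
  · rcases Nat.eq_zero_or_pos p with rfl | hp
    · simp
    have h1 : f ≤ p * (f + 1 - p) := by
      obtain ⟨c, rfl⟩ := Nat.exists_eq_add_of_le h
      have : p + c + 1 - p = c + 1 := by omega
      rw [this]; nlinarith
    calc f ^ p ≤ (p * (f + 1 - p)) ^ p := Nat.pow_le_pow_left h1 _
      _ = p ^ p * (f + 1 - p) ^ p := mul_pow _ _ _
      _ ≤ p ^ p * (1 + f.descFactorial p) := by
        apply Nat.mul_le_mul_left
        have := Nat.pow_sub_le_descFactorial f p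
        omega

lemma desc_young (p d n f : ℕ) (hp : 0 < p) (hd : d ≤ p) (hn : 0 < n) :
    (f.descFactorial d : ℝ) ≤
      (n : ℝ) ^ ((d : ℝ) / p) * (1 + p ^ p * (1 + f.descFactorial p) / n) := by
  have hn' : (0 : ℝ) < n := by exact_mod_cast hn
  have hp' : (p : ℝ) ≠ 0 := by exact_mod_cast hp.ne'
  set r : ℝ := (n : ℝ) ^ ((1 : ℝ) / p) with hr
  have hr0 : 0 < r := Real.rpow_pos_of_pos hn' _
  have hrp : r ^ p = n := by
    rw [hr, ← Real.rpow_natCast, ← Real.rpow_mul hn'.le]; field_simp; simp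
  have hrd : (n : ℝ) ^ ((d : ℝ) / p) = r ^ d := by
    rw [hr, ← Real.rpow_natCast, ← Real.rpow_mul hn'.le]; congr 1; field_simp
  have h1 : (f.descFactorial d : ℝ) ≤ (f : ℝ) ^ d := by
    exact_mod_cast Nat.descFactorial_le_pow f d
  have h2 : (f : ℝ) ^ p ≤ p ^ p * (1 + f.descFactorial p) := by
    exact_mod_cast pow_le_desc p f
  rw [hrd]
  set y : ℝ := f / r with hy
  have hy0 : 0 ≤ y := by positivity
  have hfy : (f : ℝ) = r * y := by rw [hy]; field_simp
  have h3 : y ^ d ≤ 1 + y ^ p := by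
    rcases le_total y 1 with h | h
    · have := pow_le_one₀ (n := d) hy0 h
      have : 0 ≤ y ^ p := by positivity
      linarith
    · have := pow_le_pow_right₀ h hd
      linarith
  have h4 : y ^ p = (f : ℝ) ^ p / n := by rw [hy, div_pow, hrp]
  calc (f.descFactorial d : ℝ) ≤ (f : ℝ) ^ d := h1
    _ = r ^ d * y ^ d := by rw [hfy, mul_pow]
    _ ≤ r ^ d * (1 + y ^ p) := by gcongr
    _ ≤ _ := by rw [h4]; gcongr

lemma qc_p_le (p n : ℕ) (hp : 0 < p) : qc p n p ≤ n * wc p n := by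
  rw [recursion p n hp]
  exact Finset.single_le_sum (f := fun d => qc p n d) (fun _ _ => Nat.zero_le _)
    (Nat.mem_divisors_self p hp.ne')

open Classical in
lemma qc_le' (p d : ℕ) (hp : 0 < p) (hd : d ≤ p) (α : Type) [Fintype α]
    (hn : 0 < Fintype.card α) :
    (qc p (Fintype.card α) d : ℝ) ≤ (1 + 2 * p ^ p) * (Fintype.card α : ℝ) ^ ((d : ℝ) / p) *
      wc p (Fintype.card α) := by
  have hn' : (1 : ℝ) ≤ Fintype.card α := by exact_mod_cast hn
  have hm := moment p d α
  have hmp := moment p p α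
  have hw := wc_eq p α
  rw [Nat.card_eq_fintype_card, Nat.card_eq_fintype_card] at hw
  have hpw : (qc p (Fintype.card α) p : ℝ) ≤ Fintype.card α * wc p (Fintype.card α) := by
    exact_mod_cast qc_p_le p (Fintype.card α) hp
  have hy : ∀ f : ℕ, _ := fun f => desc_young p d (Fintype.card α) f hp hd hn
  generalize Fintype.card α = n at *
  set X := (n : ℝ) ^ ((d : ℝ) / p) with hX
  have hX0 : 0 ≤ X := by positivity
  have hw0 : (0 : ℝ) ≤ wc p n := by positivity
  calc (qc p n d : ℝ) ≤ X * (wc p n + p ^ p * (wc p n + qc p n p) / n) := by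
        rw [hm, hmp, ← hw]
        push_cast
        calc _ ≤ ∑ x : {x : Perm α // x ^ p = 1},
              X * (1 + p ^ p * (1 + ((Nat.card {a : α // x.1 a = a}).descFactorial p : ℝ)) / n) :=
            Finset.sum_le_sum fun x _ => hy _
          _ = _ := by
            rw [← Finset.mul_sum, Finset.sum_add_distrib, ← Finset.sum_div, ← Finset.mul_sum,
              Finset.sum_add_distrib]
            simp
    _ ≤ X * (wc p n + p ^ p * (n * wc p n + n * wc p n) / n) := by
        gcongr
        nlinarith
    _ = _ := by field_simp; ring

lemma qc_le (p n d : ℕ) (hp : 0 < p) (hd : d ≤ p) (hn : 0 < n) :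
    (qc p n d : ℝ) ≤ (1 + 2 * p ^ p) * (n : ℝ) ^ ((d : ℝ) / p) * wc p n := by
  have := qc_le' p d hp hd (Fin n) (by simpa using hn)
  rwa [Fintype.card_fin] at this

/-- normalised count -/
noncomputable def vv (p n : ℕ) : ℝ := wc p n / n.factorial

lemma vv_pos (p n : ℕ) : 0 < vv p n := by
  have := wc_pos p n
  unfold vv
  positivity

lemma qc_eq (p n d : ℕ) (h : d ≤ n) : (qc p n d : ℝ) = n.factorial * vv p (n - d) := by
  unfold qc vv
  have := Nat.factorial_mul_descFactorial h
  rw [← this]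
  push_cast
  have : ((n - d).factorial : ℝ) ≠ 0 := by positivity
  field_simp

lemma vv_rec (p n : ℕ) (hp : 0 < p) :
    n * vv p n = ∑ d ∈ p.divisors with d ≤ n, vv p (n - d) := by
  have h : (n * wc p n : ℝ) = ∑ d ∈ p.divisors, (qc p n d : ℝ) := by
    exact_mod_cast recursion p n hp
  have h2 : ∑ d ∈ p.divisors, (qc p n d : ℝ) = ∑ d ∈ p.divisors with d ≤ n, (qc p n d : ℝ) := by
    symm
    apply Finset.sum_filter_of_ne
    intro d _ hd
    by_contra hlt
    apply hd
    simp [qc, Nat.descFactorial_eq_zero_iff_lt.2 (not_le.1 hlt)]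
  rw [h2, Finset.sum_congr rfl (fun d hd => qc_eq p n d (Finset.mem_filter.1 hd).2),
    ← Finset.mul_sum] at h
  have h0 : (n.factorial : ℝ) ≠ 0 := by positivity
  unfold vv at *
  field_simp at h ⊢
  linarith

lemma vv_mom (p n d : ℕ) (hp : 0 < p) (hd : d ≤ p) (hdn : d ≤ n) (hn : 0 < n) :
    vv p (n - d) ≤ (1 + 2 * p ^ p) * (n : ℝ) ^ ((d : ℝ) / p) * vv p n := by
  have h := qc_le p n d hp hd hn
  rw [qc_eq p n d hdn] at h
  have h0 : (0 : ℝ) < n.factorial := by positivity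
  have : (wc p n : ℝ) = n.factorial * vv p n := by unfold vv; field_simp
  rw [this] at h
  refine le_of_mul_le_mul_left (h.trans_eq ?_) h0
  ring

lemma choose_ratio (n k d : ℕ) (hdk : d ≤ k) (hk : k ≤ n) (hn : 0 < n) :
    ((n - d).choose (k - d) : ℝ) ≤ ((k : ℝ) / n) ^ d * n.choose k := by
  have h1 := Nat.choose_mul (n := n) hdk
  have h2 : k.descFactorial d * n ^ d ≤ k ^ d * n.descFactorial d := by
    clear h1
    induction d with
    | zero => simp
    | succ d ih =>
      rw [Nat.descFactorial_succ, Nat.descFactorial_succ, pow_succ, pow_succ]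
      have h3 : (k - d) * n ≤ k * (n - d) := by
        rw [Nat.sub_mul, Nat.mul_sub]
        have : k * d ≤ d * n := by rw [mul_comm]; exact Nat.mul_le_mul_left _ hk
        omega
      calc _ = (k.descFactorial d * n ^ d) * ((k - d) * n) := by ring
        _ ≤ (k ^ d * n.descFactorial d) * (k * (n - d)) := Nat.mul_le_mul (ih (by omega)) h3
        _ = _ := by ring
  rw [Nat.descFactorial_eq_factorial_mul_choose, Nat.descFactorial_eq_factorial_mul_choose] at h2
  have h3 : k.choose d * n ^ d ≤ k ^ d * n.choose d := by
    refine Nat.le_of_mul_le_mul_left ?_ (Nat.factorial_pos d)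
    linarith
  have h1' : (n.choose k * k.choose d : ℝ) = n.choose d * (n - d).choose (k - d) := by
    exact_mod_cast h1
  have h3' : (k.choose d * n ^ d : ℝ) ≤ k ^ d * n.choose d := by exact_mod_cast h3
  have hc : (0 : ℝ) < n.choose d := by exact_mod_cast Nat.choose_pos (hdk.trans hk)
  have hn' : (0 : ℝ) < (n : ℝ) ^ d := by positivity
  rw [div_pow, div_mul_eq_mul_div, le_div_iff₀ hn']
  refine le_of_mul_le_mul_left ?_ hc
  calc (n.choose d : ℝ) * ((n - d).choose (k - d) * n ^ d)
      = n.choose k * (k.choose d * n ^ d) := by rw [← mul_assoc, ← h1']; ring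
    _ ≤ n.choose k * (k ^ d * n.choose d) := by gcongr
    _ = _ := by ring

end TK
namespace TK
open Equiv

lemma two_pow_bound (t η : ℝ) (h0 : 0 < t) (h1 : t ≤ 1 / 2) (hη : 0 < η) :
    t ^ (1 + η) + (1 - t) ^ (1 + η) - 1 ≤ - (t * (1 - (1 / 2 : ℝ) ^ η)) := by
  have a1 : t ^ (1 + η) ≤ t * (1 / 2 : ℝ) ^ η := by
    rw [Real.rpow_add h0, Real.rpow_one]
    gcongr
  have a2 : (1 - t) ^ (1 + η) ≤ 1 - t := by
    have := Real.rpow_le_rpow_of_exponent_ge (x := 1 - t) (y := 1 + η) (z := 1)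
      (by linarith) (by linarith) (by linarith)
    simpa using this
  nlinarith

lemma small_term (p d n k : ℕ) (η : ℝ) (hη : 0 < η) (hη1 : η ≤ 1) (hd1 : 1 ≤ d) (hdp : 2 * d ≤ p)
    (hk : 1 ≤ k) (hkn : k ≤ n) :
    (n : ℝ) ^ ((d : ℝ) / p) * ((k : ℝ) / n) ^ (d * ((1 + η) / p)) ≤ k * (n : ℝ) ^ (-(η / p)) := by
  have hp : (0 : ℝ) < p := by exact_mod_cast (by omega : 0 < p)
  have hn : (1 : ℝ) ≤ n := by exact_mod_cast hk.trans hkn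
  have hk' : (1 : ℝ) ≤ k := by exact_mod_cast hk
  have hd1' : (1 : ℝ) ≤ d := by exact_mod_cast hd1
  have hdp' : (2 : ℝ) * d ≤ p := by exact_mod_cast hdp
  have e1 : ((k : ℝ) / n) ^ (d * ((1 + η) / p))
      = (k : ℝ) ^ (d * ((1 + η) / p)) * (n : ℝ) ^ (-(d * ((1 + η) / p))) := by
    rw [Real.div_rpow (by linarith) (by linarith), Real.rpow_neg (by linarith)]; rfl
  have e2 : (n : ℝ) ^ ((d : ℝ) / p) * (n : ℝ) ^ (-(d * ((1 + η) / p))) = (n : ℝ) ^ (-(d * η / p)) := by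
    rw [← Real.rpow_add (by linarith)]; congr 1; field_simp; ring
  have e3 : (k : ℝ) ^ (d * ((1 + η) / p)) ≤ k := by
    have := Real.rpow_le_rpow_of_exponent_le hk' (y := d * ((1 + η) / p)) (z := 1) (by
      rw [← mul_div_assoc, div_le_one hp]; nlinarith)
    simpa using this
  have e4 : (n : ℝ) ^ (-(d * η / p)) ≤ (n : ℝ) ^ (-(η / p)) := by
    apply Real.rpow_le_rpow_of_exponent_le hn
    rw [neg_le_neg_iff]
    gcongr
    nlinarith
  calc _ = (k : ℝ) ^ (d * ((1 + η) / p)) * ((n : ℝ) ^ ((d : ℝ) / p) * (n : ℝ) ^ (-(d * ((1 + η) / p)))) := by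
        rw [e1]; ring
    _ ≤ _ := by rw [e2]; gcongr

lemma step (p : ℕ) (hp : 2 ≤ p) (η : ℝ) (hη : 0 < η) (hη1 : η ≤ 1) :
    ∃ n0 : ℕ, ∀ k l : ℕ, 1 ≤ k → k ≤ l → n0 ≤ k + l →
      ∑ d ∈ p.divisors with d ≤ k + l, vv p (k + l - d) *
        (((k : ℝ) / ((k + l : ℕ) : ℝ)) ^ (d * ((1 + η) / p)) +
          ((l : ℝ) / ((k + l : ℕ) : ℝ)) ^ (d * ((1 + η) / p)))
        ≤ ((k + l : ℕ) : ℝ) * vv p (k + l) := by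
  set C : ℝ := 1 + 2 * p ^ p with hC
  have hC0 : 0 < C := by positivity
  have hp0 : (0 : ℝ) < p := by exact_mod_cast (by omega : 0 < p)
  set c : ℝ := 1 - (1 / 2 : ℝ) ^ η with hc
  have hc0 : 0 < c := by
    have := Real.rpow_lt_one (x := 1 / 2) (z := η) (by norm_num) (by norm_num) hη
    linarith
  have t1 : ∀ᶠ n : ℕ in atTop, p * C * (n : ℝ) ^ (-(η / p)) ≤ c / 2 := by
    have : Tendsto (fun n : ℕ => p * C * (n : ℝ) ^ (-(η / p))) atTop (𝓝 (p * C * 0)) :=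
      ((tendsto_rpow_neg_atTop (by positivity)).comp tendsto_natCast_atTop_atTop).const_mul _
    rw [mul_zero] at this
    exact this.eventually_le_const (by positivity)
  have t2 : ∀ᶠ n : ℕ in atTop, p * C * (n : ℝ) ^ (-(1 / 2 : ℝ)) ≤ 1 / 2 := by
    have : Tendsto (fun n : ℕ => p * C * (n : ℝ) ^ (-(1 / 2 : ℝ))) atTop (𝓝 (p * C * 0)) :=
      ((tendsto_rpow_neg_atTop (by positivity)).comp tendsto_natCast_atTop_atTop).const_mul _
    rw [mul_zero] at this
    exact this.eventually_le_const (by positivity)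
  obtain ⟨n0, hn0⟩ := eventually_atTop.1 (t1.and (t2.and (eventually_ge_atTop p)))
  refine ⟨n0, fun k l hk hkl hn => ?_⟩
  obtain ⟨h1, h2, hnp⟩ := hn0 _ hn
  have hlk : l = (k + l) - k := by omega
  have hk2 : 2 * k ≤ k + l := by omega
  clear hn
  have hl' : (l : ℝ) = ((k + l : ℕ) : ℝ) - k := by push_cast; ring
  generalize hnn : k + l = n at *
  have hn1 : 1 ≤ n := by omega
  have hn1' : (1 : ℝ) ≤ n := by exact_mod_cast hn1
  have hk' : (1 : ℝ) ≤ k := by exact_mod_cast hk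
  have hk2' : 2 * (k : ℝ) ≤ n := by exact_mod_cast hk2
  set S := p.divisors.filter (· ≤ n) with hS
  have hpS : p ∈ S := by simp [hS, hnp]; omega
  have hrec := vv_rec p n (by omega)
  rw [← hS, ← Finset.add_sum_erase _ _ hpS] at hrec
  have hv := vv_pos p n
  have hcard : ((S.erase p).card : ℝ) ≤ p := by
    have : (S.erase p).card ≤ p := (Finset.card_le_card ((Finset.erase_subset _ _).trans
      (Finset.filter_subset _ _))).trans (Nat.card_divisors_le_self p)
    exact_mod_cast this
  have hmem : ∀ d ∈ S.erase p, 1 ≤ d ∧ 2 * d ≤ p ∧ d ≤ n := by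
    intro d hd
    simp only [hS, Finset.mem_erase, Finset.mem_filter, Nat.mem_divisors] at hd
    obtain ⟨hne, ⟨hdvd, _⟩, hdn⟩ := hd
    obtain ⟨q, hq⟩ := hdvd
    have hd0 : d ≠ 0 := by rintro rfl; omega
    have hq2 : 2 ≤ q := by
      rcases q with _ | _ | q
      · omega
      · omega
      · omega
    refine ⟨by omega, ?_, hdn⟩
    rw [hq]; nlinarith
  -- lower bound for the main term
  have hmain : n * vv p n / 2 ≤ vv p (n - p) := by
    have : ∑ d ∈ S.erase p, vv p (n - d) ≤ n * vv p n / 2 := by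
      calc ∑ d ∈ S.erase p, vv p (n - d) ≤ ∑ d ∈ S.erase p, C * (n : ℝ) ^ (1 / 2 : ℝ) * vv p n := by
            apply Finset.sum_le_sum
            intro d hd
            obtain ⟨hd1, hd2, hdn⟩ := hmem d hd
            refine (vv_mom p n d (by omega) (by omega) hdn hn1).trans ?_
            have hx : (n : ℝ) ^ ((d : ℝ) / p) ≤ (n : ℝ) ^ (1 / 2 : ℝ) := by
              apply Real.rpow_le_rpow_of_exponent_le hn1'
              rw [div_le_div_iff₀ hp0 two_pos]
              have : (2 : ℝ) * d ≤ p := by exact_mod_cast hd2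
              linarith
            gcongr
        _ = (S.erase p).card * (C * (n : ℝ) ^ (1 / 2 : ℝ) * vv p n) := by simp
        _ ≤ p * (C * (n : ℝ) ^ (1 / 2 : ℝ) * vv p n) := by gcongr
        _ = n * (p * C * (n : ℝ) ^ (-(1 / 2 : ℝ))) * vv p n := by
            have : (n : ℝ) ^ (1 / 2 : ℝ) = n * (n : ℝ) ^ (-(1 / 2 : ℝ)) := by
              nth_rewrite 2 [← Real.rpow_one (n : ℝ)]
              rw [← Real.rpow_add (by linarith)]; norm_num
            rw [this]; ring
        _ ≤ n * (1 / 2) * vv p n := by gcongr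
        _ = _ := by ring
    linarith
  rw [← Finset.add_sum_erase _ _ hpS, hrec]
  have hpe : (p : ℝ) * ((1 + η) / p) = 1 + η := by field_simp
  have hP : vv p (n - p) * (((k : ℝ) / n) ^ (p * ((1 + η) / p)) + ((l : ℝ) / n) ^ (p * ((1 + η) / p)))
      ≤ vv p (n - p) - vv p n * k * (c / 2) := by
    rw [hpe]
    have e : (l : ℝ) / n = 1 - k / n := by rw [hl']; field_simp
    rw [e]
    have hb := two_pow_bound ((k : ℝ) / n) η (by positivity)
      (by rw [div_le_div_iff₀ (by linarith) two_pos]; linarith) hη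
    have hb2 : vv p n * k * (c / 2) ≤ vv p (n - p) * (k / n * c) := by
      calc vv p n * k * (c / 2) = (n * vv p n / 2) * (k / n * c) := by field_simp
        _ ≤ _ := by gcongr
    have := vv_pos p (n - p)
    nlinarith
  have hR : ∑ d ∈ S.erase p, vv p (n - d) * (((k : ℝ) / n) ^ (d * ((1 + η) / p)) +
        ((l : ℝ) / n) ^ (d * ((1 + η) / p)))
      ≤ ∑ d ∈ S.erase p, vv p (n - d) + vv p n * k * (c / 2) := by
    calc _ ≤ ∑ d ∈ S.erase p, (vv p (n - d) + C * vv p n * (k * (n : ℝ) ^ (-(η / p)))) := by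
          apply Finset.sum_le_sum
          intro d hd
          obtain ⟨hd1, hd2, hdn⟩ := hmem d hd
          have hm := vv_mom p n d (by omega) (by omega) hdn hn1
          have hs := small_term p d n k η hη hη1 hd1 hd2 hk (by omega)
          have hle : ((l : ℝ) / n) ^ (d * ((1 + η) / p)) ≤ 1 := by
            apply Real.rpow_le_one (by positivity)
            · rw [div_le_one (by linarith)]; linarith
            · positivity
          have hvd := vv_pos p (n - d)
          set a := ((k : ℝ) / n) ^ (d * ((1 + η) / p)) with ha
          have ha0 : 0 ≤ a := by positivity
          calc vv p (n - d) * (a + ((l : ℝ) / n) ^ (d * ((1 + η) / p)))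
              ≤ vv p (n - d) * (a + 1) := by gcongr
            _ = vv p (n - d) + vv p (n - d) * a := by ring
            _ ≤ vv p (n - d) + (C * (n : ℝ) ^ ((d : ℝ) / p) * vv p n) * a := by gcongr
            _ = vv p (n - d) + C * vv p n * ((n : ℝ) ^ ((d : ℝ) / p) * a) := by ring
            _ ≤ _ := by gcongr
      _ = ∑ d ∈ S.erase p, vv p (n - d) +
            (S.erase p).card * (C * vv p n * (k * (n : ℝ) ^ (-(η / p)))) := by
          rw [Finset.sum_add_distrib]; simp
      _ ≤ ∑ d ∈ S.erase p, vv p (n - d) + p * (C * vv p n * (k * (n : ℝ) ^ (-(η / p)))) := by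
          gcongr
      _ = ∑ d ∈ S.erase p, vv p (n - d) + vv p n * k * (p * C * (n : ℝ) ^ (-(η / p))) := by ring
      _ ≤ _ := by gcongr
  linarith

lemma vv_zero (p : ℕ) : vv p 0 = 1 := by
  have : wc p 0 = 1 := by
    unfold wc
    rw [Nat.card_eq_one_iff_unique]
    exact ⟨⟨fun a b => Subtype.ext (Subsingleton.elim _ _)⟩, ⟨⟨1, one_pow _⟩⟩⟩
  simp [vv, this]

set_option maxHeartbeats 1000000 in
lemma key (p : ℕ) (hp : 2 ≤ p) (η : ℝ) (hη : 0 < η) (hη1 : η ≤ 1) :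
    ∃ K : ℝ, 0 < K ∧ ∀ k l : ℕ, vv p k * vv p l ≤
      K * ((k + l).choose k : ℝ) ^ ((1 + η) / p) * vv p (k + l) := by
  obtain ⟨n0, hn0⟩ := step p hp η hη hη1
  have hp0 : (0 : ℝ) < p := by exact_mod_cast (by omega : 0 < p)
  set γ := (1 + η) / p with hγ
  have hγ0 : 0 < γ := by positivity
  set K : ℝ := 1 + ∑ k ∈ Finset.range n0, ∑ l ∈ Finset.range n0, vv p k * vv p l / vv p (k + l)
    with hK
  have hterm : ∀ k l, 0 ≤ vv p k * vv p l / vv p (k + l) := fun k l => by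
    have := vv_pos p k; have := vv_pos p l; have := vv_pos p (k + l); positivity
  have hK1 : 1 ≤ K := by
    have : 0 ≤ ∑ k ∈ Finset.range n0, ∑ l ∈ Finset.range n0, vv p k * vv p l / vv p (k + l) :=
      Finset.sum_nonneg fun k _ => Finset.sum_nonneg fun l _ => hterm k l
    linarith
  have hKs : ∀ k l, k + l < n0 → vv p k * vv p l / vv p (k + l) ≤ K := by
    intro k l h
    have h1 : vv p k * vv p l / vv p (k + l) ≤
        ∑ l ∈ Finset.range n0, vv p k * vv p l / vv p (k + l) :=
      Finset.single_le_sum (f := fun l => vv p k * vv p l / vv p (k + l))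
        (fun l _ => hterm k l) (Finset.mem_range.2 (by omega))
    have h2 := Finset.single_le_sum
      (f := fun k => ∑ l ∈ Finset.range n0, vv p k * vv p l / vv p (k + l))
      (s := Finset.range n0) (a := k)
      (fun k _ => Finset.sum_nonneg fun l _ => hterm k l) (Finset.mem_range.2 (by omega))
    linarith
  clear_value K
  clear hK hterm
  have hK0 : 0 < K := by linarith
  refine ⟨K, hK0, ?_⟩
  have hch : ∀ n k : ℕ, k ≤ n → (1 : ℝ) ≤ (n.choose k : ℝ) ^ γ := by
    intro n k h
    apply Real.one_le_rpow _ hγ0.le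
    exact_mod_cast Nat.choose_pos h
  suffices H : ∀ n k l : ℕ, k + l = n → k ≤ l → vv p k * vv p l ≤
      K * ((k + l).choose k : ℝ) ^ γ * vv p (k + l) by
    intro k l
    rcases le_total k l with h | h
    · exact H _ k l rfl h
    · have := H _ l k rfl h
      rw [mul_comm (vv p k), add_comm k l]
      rwa [Nat.choose_symm_add] at this
  intro n
  induction n using Nat.strong_induction_on with
  | _ n ih =>
    have ih' : ∀ k l : ℕ, k + l < n → vv p k * vv p l ≤
        K * ((k + l).choose k : ℝ) ^ γ * vv p (k + l) := by
      intro k l h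
      rcases le_total k l with h' | h'
      · exact ih _ h k l rfl h'
      · have := ih _ h l k (by omega) h'
        rw [mul_comm (vv p k), add_comm k l]
        rwa [Nat.choose_symm_add] at this
    intro k l hkl hle
    have hvn := vv_pos p (k + l)
    rcases Nat.eq_zero_or_pos k with rfl | hk
    · rw [vv_zero, one_mul, zero_add, Nat.choose_zero_right, Nat.cast_one, Real.one_rpow, mul_one]
      have := vv_pos p l
      nlinarith
    rcases lt_or_ge (k + l) n0 with hlt | hge
    · have h1 := hKs k l hlt
      rw [div_le_iff₀ hvn] at h1
      have h2 := hch (k + l) k (by omega)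
      have : K * 1 * vv p (k + l) ≤ K * ((k + l).choose k : ℝ) ^ γ * vv p (k + l) := by gcongr
      linarith
    have hs := hn0 k l hk hle hge
    have hl : 0 < l := by omega
    subst hkl
    clear hKs hn0
    have hN : 0 < k + l := by omega
    have hN' : (0 : ℝ) < ((k + l : ℕ) : ℝ) := by exact_mod_cast hN
    obtain ⟨n, hn⟩ : ∃ n, n = k + l := ⟨_, rfl⟩
    rw [← hn] at hs hN hN' hvn hge ih ih' ⊢
    set X : ℝ := (n.choose k : ℝ) ^ γ with hX
    have hX0 : 0 ≤ X := by positivity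
    set S := p.divisors.filter (· ≤ n) with hS
    have hrk := vv_rec p k (by omega)
    have hrl := vv_rec p l (by omega)
    have bk : (k * vv p k) * vv p l ≤ K * X * ∑ d ∈ S, vv p (n - d) * ((k : ℝ) / n) ^ (d * γ) := by
      rw [hrk, Finset.sum_mul, Finset.mul_sum]
      calc _ ≤ ∑ d ∈ p.divisors with d ≤ k, K * X * (vv p (n - d) * ((k : ℝ) / n) ^ (d * γ)) := by
            apply Finset.sum_le_sum
            intro d hd
            simp only [Finset.mem_filter, Nat.mem_divisors] at hd
            have hd0 : 0 < d := Nat.pos_of_dvd_of_pos hd.1.1 (by omega)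
            have h1 := ih' (k - d) l (by omega)
            have e : k - d + l = n - d := by omega
            rw [e] at h1
            have h2 : (((n - d).choose (k - d) : ℕ) : ℝ) ^ γ ≤ ((k : ℝ) / n) ^ (d * γ) * X := by
              rw [Real.rpow_mul (by positivity), Real.rpow_natCast, hX,
                ← Real.mul_rpow (by positivity) (by positivity)]
              exact Real.rpow_le_rpow (by positivity) (choose_ratio n k d hd.2 (by omega) hN) hγ0.le
            have := vv_pos p (n - d)
            calc _ ≤ _ := h1
              _ ≤ K * (((k : ℝ) / n) ^ (d * γ) * X) * vv p (n - d) := by gcongr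
              _ = _ := by ring
        _ ≤ _ := by
            apply Finset.sum_le_sum_of_subset_of_nonneg
            · intro d hd
              simp only [hS, Finset.mem_filter] at hd ⊢
              exact ⟨hd.1, by omega⟩
            · intro d _ _
              have := vv_pos p (n - d)
              positivity
    have bl : vv p k * (l * vv p l) ≤ K * X * ∑ d ∈ S, vv p (n - d) * ((l : ℝ) / n) ^ (d * γ) := by
      rw [hrl, Finset.mul_sum, Finset.mul_sum]
      calc _ ≤ ∑ d ∈ p.divisors with d ≤ l, K * X * (vv p (n - d) * ((l : ℝ) / n) ^ (d * γ)) := by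
            apply Finset.sum_le_sum
            intro d hd
            simp only [Finset.mem_filter, Nat.mem_divisors] at hd
            have hd0 : 0 < d := Nat.pos_of_dvd_of_pos hd.1.1 (by omega)
            have h1 := ih' k (l - d) (by omega)
            have e : k + (l - d) = n - d := by omega
            rw [e] at h1
            have e2 : (n - d).choose k = (n - d).choose (l - d) := by
              rw [← Nat.choose_symm (by omega : k ≤ n - d)]; congr 1; omega
            have e3 : n.choose k = n.choose l := by
              rw [← Nat.choose_symm (by omega : k ≤ n)]; congr 1; omega
            have h2 : (((n - d).choose k : ℕ) : ℝ) ^ γ ≤ ((l : ℝ) / n) ^ (d * γ) * X := by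
              rw [Real.rpow_mul (by positivity), Real.rpow_natCast, hX,
                ← Real.mul_rpow (by positivity) (by positivity), e2, e3]
              exact Real.rpow_le_rpow (by positivity) (choose_ratio n l d hd.2 (by omega) hN) hγ0.le
            have := vv_pos p (n - d)
            calc _ ≤ _ := h1
              _ ≤ K * (((l : ℝ) / n) ^ (d * γ) * X) * vv p (n - d) := by gcongr
              _ = _ := by ring
        _ ≤ _ := by
            apply Finset.sum_le_sum_of_subset_of_nonneg
            · intro d hd
              simp only [hS, Finset.mem_filter] at hd ⊢
              exact ⟨hd.1, by omega⟩
            · intro d _ _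
              have := vv_pos p (n - d)
              positivity
    have hs' : ∑ d ∈ S, vv p (n - d) * ((k : ℝ) / n) ^ (d * γ) +
        ∑ d ∈ S, vv p (n - d) * ((l : ℝ) / n) ^ (d * γ) ≤ n * vv p n := by
      rw [← Finset.sum_add_distrib]
      refine le_trans (le_of_eq ?_) hs
      exact Finset.sum_congr rfl fun d _ => by ring
    refine le_of_mul_le_mul_left ?_ hN'
    have ek : (n : ℝ) = k + l := by rw [hn]; push_cast; ring
    calc (n : ℝ) * (vv p k * vv p l) = (k * vv p k) * vv p l + vv p k * (l * vv p l) := by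
          rw [ek]; ring
      _ ≤ K * X * (∑ d ∈ S, vv p (n - d) * ((k : ℝ) / n) ^ (d * γ) +
        ∑ d ∈ S, vv p (n - d) * ((l : ℝ) / n) ^ (d * γ)) := by rw [mul_add]; linarith
      _ ≤ K * X * (n * vv p n) := by gcongr
      _ = _ := by ring

end TK
namespace TK
open Equiv

/-- number of cycles -/
noncomputable def cyc {α : Type} (z : Perm α) : ℕ := Nat.card (Quotient (Perm.SameCycle.setoid z))

lemma two_cyc_le {α : Type} [Finite α] (z : Perm α) (hz : ∀ a, z a ≠ a) :
    2 * cyc z ≤ Nat.card α := by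
  have : Nat.card (Bool × Quotient (Perm.SameCycle.setoid z)) ≤ Nat.card α := by
    refine Nat.card_le_card_of_injective
      (fun t => if t.1 then t.2.out else z t.2.out) ?_
    have hq : ∀ q : Quotient (Perm.SameCycle.setoid z),
        (⟦z q.out⟧ : Quotient (Perm.SameCycle.setoid z)) = q := by
      intro q
      conv_rhs => rw [← Quotient.out_eq q]
      apply Quotient.sound
      change Perm.SameCycle z (z q.out) q.out
      exact Perm.sameCycle_apply_left.2 (Perm.SameCycle.refl _ _)
    rintro ⟨b, q⟩ ⟨b', q'⟩ h
    have hqq : q = q' := by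
      have := congrArg (fun a => (⟦a⟧ : Quotient (Perm.SameCycle.setoid z))) h
      cases b <;> cases b' <;> simpa [hq] using this
    subst hqq
    cases b <;> cases b'
    · rfl
    · exact absurd h (by simpa using hz _)
    · exact absurd h.symm (by simpa using hz _)
    · rfl
  simpa [cyc, Nat.card_prod] using this

lemma roots_le {α : Type} [Finite α] (p : ℕ) (z : Perm α) :
    Nat.card {x : Perm α // x ^ p = z} ≤ 2 ^ Nat.card α * wc p (cyc z) := by
  set Q := Quotient (Perm.SameCycle.setoid z) with hQ
  have hcomm : ∀ x : Perm α, x ^ p = z → Commute x z := by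
    rintro x rfl
    exact Commute.self_pow x p
  have hsc : ∀ x : Perm α, x ^ p = z → ∀ a b, Perm.SameCycle z a b → Perm.SameCycle z (x a) (x b) := by
    rintro x hx a b ⟨i, hi⟩
    refine ⟨i, ?_⟩
    have : (z ^ i * x) a = (x * z ^ i) a := by rw [((hcomm x hx).zpow_right i).eq]
    rw [Perm.mul_apply, Perm.mul_apply, hi] at this
    exact this
  have hsc' : ∀ x : Perm α, x ^ p = z → ∀ a b, Perm.SameCycle z a b →
      Perm.SameCycle z (x⁻¹ a) (x⁻¹ b) := by
    rintro x hx a b ⟨i, hi⟩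
    refine ⟨i, ?_⟩
    have : (z ^ i * x⁻¹) a = (x⁻¹ * z ^ i) a := by
      rw [((hcomm x hx).inv_left.zpow_right i).eq]
    rw [Perm.mul_apply, Perm.mul_apply, hi] at this
    exact this
  let Y : {x : Perm α // x ^ p = z} → Perm Q := fun x =>
    { toFun := Quotient.map x.1 (hsc x.1 x.2)
      invFun := Quotient.map (x.1⁻¹ : Perm α) (hsc' x.1 x.2)
      left_inv := by
        rintro ⟨a⟩
        change (⟦x.1⁻¹ (x.1 a)⟧ : Q) = ⟦a⟧
        simp
      right_inv := by
        rintro ⟨a⟩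
        change (⟦x.1 (x.1⁻¹ a)⟧ : Q) = ⟦a⟧
        simp }
  have hY : ∀ x a, Y x (⟦a⟧ : Q) = ⟦x.1 a⟧ := fun x a => rfl
  have hYk : ∀ x (k : ℕ) a, (Y x ^ k) (⟦a⟧ : Q) = ⟦(x.1 ^ k) a⟧ := by
    intro x k
    induction k with
    | zero => intro a; rfl
    | succ k ih => intro a; rw [pow_succ', pow_succ', Perm.mul_apply, Perm.mul_apply, ih, hY]
  have hYp : ∀ x, Y x ^ p = 1 := by
    intro x
    apply Equiv.ext
    rintro ⟨a⟩
    change (Y x ^ p) (⟦a⟧ : Q) = ⟦a⟧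
    rw [hYk, x.2]
    apply Quotient.sound
    change Perm.SameCycle z (z a) a
    exact Perm.sameCycle_apply_left.2 (Perm.SameCycle.refl _ _)
  have hcard : Nat.card (Set α × {y : Perm Q // y ^ p = 1}) = 2 ^ Nat.card α * wc p (cyc z) := by
    rw [Nat.card_prod, wc_eq]
    congr 1
    have := Fintype.ofFinite α
    rw [Nat.card_eq_fintype_card, Nat.card_eq_fintype_card, Fintype.card_set]
  rw [← hcard]
  refine Nat.card_le_card_of_injective
    (fun x => (Set.range (fun q : Q => x.1 q.out), ⟨Y x, hYp x⟩)) ?_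
  intro x x' h
  simp only [Prod.mk.injEq, Subtype.mk.injEq] at h
  obtain ⟨hT, hYY⟩ := h
  have hrep : ∀ q : Q, x.1 q.out = x'.1 q.out := by
    intro q
    have : x.1 q.out ∈ Set.range (fun q : Q => x'.1 q.out) := by rw [← hT]; exact ⟨q, rfl⟩
    obtain ⟨q', hq'⟩ := this
    simp only at hq'
    have h1 : Y x (⟦q.out⟧ : Q) = Y x' (⟦q'.out⟧ : Q) := by rw [hY, hY, hq']
    rw [hYY] at h1
    have h2 := (Y x').injective h1
    rw [Quotient.out_eq, Quotient.out_eq] at h2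
    rw [← hq', h2]
  apply Subtype.ext
  apply Equiv.ext
  intro a
  have hs : Perm.SameCycle z (⟦a⟧ : Q).out a := Quotient.exact (Quotient.out_eq (⟦a⟧ : Q))
  obtain ⟨i, hi⟩ := hs
  have c1 : ∀ y : Perm α, y ^ p = z → y a = (z ^ i) (y (⟦a⟧ : Q).out) := by
    intro y hy
    have : (z ^ i * y) (⟦a⟧ : Q).out = (y * z ^ i) (⟦a⟧ : Q).out := by
      rw [((hcomm y hy).zpow_right i).eq]
    rw [Perm.mul_apply, Perm.mul_apply, hi] at this
    exact this.symm
  rw [c1 x.1 x.2, c1 x'.1 x'.2, hrep]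

lemma exists_perm {α β : Type} [Fintype α] [DecidableEq β] (f g : α → β)
    (h : (Finset.univ : Finset α).val.map f = (Finset.univ : Finset α).val.map g) :
    ∃ σ : Perm α, f ∘ σ = g := by
  have hc : ∀ b, Nonempty ({a // g a = b} ≃ {a // f a = b}) := by
    intro b
    have := congrArg (Multiset.count b) h
    rw [Multiset.count_map, Multiset.count_map] at this
    rw [← Fintype.card_eq, Fintype.card_subtype, Fintype.card_subtype]
    simp only [Finset.card_def, Finset.filter_val]
    simpa [eq_comm] using this.symm
  let e : ∀ b, {a // g a = b} ≃ {a // f a = b} := fun b => Classical.choice (hc b)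
  refine ⟨(Equiv.sigmaFiberEquiv g).symm.trans ((Equiv.sigmaCongrRight e).trans
    (Equiv.sigmaFiberEquiv f)), ?_⟩
  ext a
  simp only [Function.comp, Equiv.trans_apply]
  exact (e (g a) ⟨a, rfl⟩).2

open Classical in
lemma sum_pow_cyc (α : Type) [Fintype α] :
    ∑ z : Perm α, (Fintype.card α) ^ cyc z ≤ 4 ^ Fintype.card α * (Fintype.card α).factorial := by
  set n := Fintype.card α with hn
  let _ : MulAction (Perm α) (α → Fin n) := arrowAction
  have hB := MulAction.sum_card_fixedBy_eq_card_orbits_mul_card_group (Perm α) (α → Fin n)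
  have h1 : ∀ z : Perm α, n ^ cyc z ≤ Fintype.card (MulAction.fixedBy (α → Fin n) z) := by
    intro z
    have : n ^ cyc z = Nat.card (Quotient (Perm.SameCycle.setoid z) → Fin n) := by
      rw [Nat.card_fun]; simp [cyc]
    rw [this, ← Nat.card_eq_fintype_card]
    refine Nat.card_le_card_of_injective (fun φ => ⟨fun a => φ ⟦a⟧, ?_⟩) ?_
    · change (fun a => φ (Quotient.mk _ (z⁻¹ • a))) = _
      funext a
      congr 1
      apply Quotient.sound
      change Perm.SameCycle z (z⁻¹ a) a
      exact ⟨1, by simp⟩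
    · intro φ ψ h
      funext q
      obtain ⟨a, rfl⟩ := Quotient.exists_rep q
      exact congrFun (congrArg Subtype.val h) a
  have h2 : Fintype.card (Quotient (MulAction.orbitRel (Perm α) (α → Fin n))) ≤ 4 ^ n := by
    have h3 : Fintype.card (Quotient (MulAction.orbitRel (Perm α) (α → Fin n)))
        ≤ Fintype.card (Sym (Fin n) n) := by
      refine Fintype.card_le_of_injective
        (fun q => ⟨(Finset.univ : Finset α).val.map q.out, by simp [hn]⟩) ?_
      intro q q' h
      have := congrArg Subtype.val h
      obtain ⟨σ, hσ⟩ := exists_perm _ _ this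
      rw [← Quotient.out_eq q, ← Quotient.out_eq q']
      symm
      apply Quotient.sound
      change q'.out ∈ MulAction.orbit (Perm α) q.out
      refine ⟨σ⁻¹, ?_⟩
      rw [← hσ]
      change (fun a => q.out (σ⁻¹⁻¹ • a)) = _
      funext a
      simp
    refine h3.trans ?_
    rw [Sym.card_sym_eq_choose]
    calc _ ≤ 2 ^ (Fintype.card (Fin n) + n - 1) := Nat.choose_le_two_pow _ _
      _ ≤ 2 ^ (2 * n) := Nat.pow_le_pow_right (by norm_num) (by simp; omega)
      _ = 4 ^ n := by rw [pow_mul]; norm_num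
  calc _ ≤ ∑ z : Perm α, Fintype.card (MulAction.fixedBy (α → Fin n) z) :=
        Finset.sum_le_sum fun z _ => h1 z
    _ = _ := hB
    _ ≤ _ := by
      rw [Fintype.card_perm]
      exact Nat.mul_le_mul_right _ h2

end TK
namespace TK
open Equiv

abbrev Tup (m : ℕ) (p : Fin m → ℕ) (α : Type) : Type :=
  {x : Fin m → Perm α // ∀ i j, x i ^ p i = x j ^ p j}

noncomputable def hc (m : ℕ) (p : Fin m → ℕ) (n : ℕ) : ℕ := Nat.card (Tup m p (Fin n))

lemma hc_eq (m : ℕ) (p : Fin m → ℕ) (α : Type) [Finite α] :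
    Nat.card (Tup m p α) = hc m p (Nat.card α) := by
  let e : α ≃ Fin (Nat.card α) := Finite.equivFin α
  let E : Perm α ≃* Perm (Fin (Nat.card α)) := e.permCongrHom
  refine Nat.card_congr ((Equiv.arrowCongr (Equiv.refl (Fin m)) E.toEquiv).subtypeEquiv ?_)
  intro x
  refine forall_congr' fun i => forall_congr' fun j => ?_
  change _ ↔ (E (x i)) ^ p i = (E (x j)) ^ p j
  rw [← map_pow, ← map_pow, E.injective.eq_iff]

abbrev GTup (m : ℕ) (p : Fin m → ℕ) (α : Type) : Type :=
  {x : Fin m → Perm α // (∀ i j, x i ^ p i = x j ^ p j) ∧ ∀ i a, (x i ^ p i) a ≠ a}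

noncomputable def gc (m : ℕ) (p : Fin m → ℕ) (n : ℕ) : ℕ := Nat.card (GTup m p (Fin n))

lemma gc_eq (m : ℕ) (p : Fin m → ℕ) (α : Type) [Finite α] :
    Nat.card (GTup m p α) = gc m p (Nat.card α) := by
  let e : α ≃ Fin (Nat.card α) := Finite.equivFin α
  let E : Perm α ≃* Perm (Fin (Nat.card α)) := e.permCongrHom
  refine Nat.card_congr ((Equiv.arrowCongr (Equiv.refl (Fin m)) E.toEquiv).subtypeEquiv ?_)
  intro x
  refine and_congr (forall_congr' fun i => forall_congr' fun j => ?_) (forall_congr' fun i => ?_)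
  · change _ ↔ (E (x i)) ^ p i = (E (x j)) ^ p j
    rw [← map_pow, ← map_pow, E.injective.eq_iff]
  · change _ ↔ ∀ a, ((E (x i)) ^ p i) a ≠ a
    rw [← map_pow, ← e.forall_congr_right]
    refine forall_congr' fun a => not_congr ?_
    change _ ↔ e ((x i ^ p i) (e.symm (e a))) = e a
    simp

lemma union_bound {α X : Type} [Fintype α] [Finite X] (R : Finset α → X → Prop)
    (hR : ∀ x, ∃ A, R A x) (f : ℕ → ℕ) (hf : ∀ A, Nat.card {x // R A x} ≤ f A.card) :
    Nat.card X ≤ ∑ k ∈ Finset.range (Fintype.card α + 1), (Fintype.card α).choose k * f k := by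
  choose A hA using hR
  calc Nat.card X ≤ Nat.card (Σ A : Finset α, {x // R A x}) := by
        refine Nat.card_le_card_of_injective (fun x => ⟨A x, x, hA x⟩) ?_
        intro x y hxy
        have := congrArg (fun s : (Σ A : Finset α, {x // R A x}) => s.2.1) hxy
        exact this
    _ = ∑ A : Finset α, Nat.card {x // R A x} := Nat.card_sigma
    _ ≤ ∑ A : Finset α, f A.card := Finset.sum_le_sum fun A _ => hf A
    _ = ∑ A ∈ (Finset.univ : Finset α).powerset, f A.card := by simp
    _ = _ := by
      rw [Finset.sum_powerset_apply_card]
      simp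

lemma restr_inj {m : ℕ} {α : Type} (A : Finset α) (x y : Fin m → Perm α)
    (hx : ∀ i a, x i a ∈ A ↔ a ∈ A) (hy : ∀ i a, y i a ∈ A ↔ a ∈ A)
    (h1 : ∀ i, (x i).subtypePerm (p := fun a => a ∈ A) (hx i) = (y i).subtypePerm (hy i))
    (h2 : ∀ i, (x i).subtypePerm (p := fun a => a ∉ A) (fun a => not_congr (hx i a))
      = (y i).subtypePerm (fun a => not_congr (hy i a))) : x = y := by
  funext i
  ext a
  by_cases ha : a ∈ A
  · have := congrArg Subtype.val (Perm.congr_fun (h1 i) ⟨a, ha⟩)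
    simpa using this
  · have := congrArg Subtype.val (Perm.congr_fun (h2 i) ⟨a, ha⟩)
    simpa using this

lemma card_compl {α : Type} [Fintype α] (A : Finset α) :
    Nat.card {a // a ∉ A} = Fintype.card α - A.card := by
  classical
  rw [Nat.card_eq_fintype_card, Fintype.card_subtype_compl]
  simp

abbrev NT (m : ℕ) (p : Fin m → ℕ) (α : Type) [Fintype α] : Type :=
  {x : Tup m p α // ∃ A : Finset α, (A.card ≠ 0 ∧ A.card ≠ Fintype.card α) ∧
    ∀ i a, x.1 i a ∈ A ↔ a ∈ A}

lemma nt_le (m : ℕ) (p : Fin m → ℕ) (α : Type) [Fintype α] :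
    Nat.card (NT m p α) ≤ ∑ k ∈ Finset.range (Fintype.card α + 1), (Fintype.card α).choose k *
      (if k ≠ 0 ∧ k ≠ Fintype.card α then hc m p k * hc m p (Fintype.card α - k) else 0) := by
  refine union_bound (X := NT m p α) (fun A x => (A.card ≠ 0 ∧ A.card ≠ Fintype.card α) ∧
    ∀ i a, x.1.1 i a ∈ A ↔ a ∈ A) (fun x => x.2) _ ?_
  intro A
  split_ifs with hA
  · have e1 : hc m p A.card = Nat.card (Tup m p {a // a ∈ A}) := by rw [hc_eq]; simp
    have e2 : hc m p (Fintype.card α - A.card) = Nat.card (Tup m p {a // a ∉ A}) := by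
      rw [hc_eq, card_compl]
    rw [e1, e2, ← Nat.card_prod]
    refine Nat.card_le_card_of_injective (fun x =>
      (⟨fun i => (x.1.1.1 i).subtypePerm (x.2.2 i), fun i j => ?_⟩,
       ⟨fun i => (x.1.1.1 i).subtypePerm (fun a => not_congr (x.2.2 i a)), fun i j => ?_⟩)) ?_
    · rw [Perm.subtypePerm_pow, Perm.subtypePerm_pow]
      congr 1
      exact x.1.1.2 i j
    · rw [Perm.subtypePerm_pow, Perm.subtypePerm_pow]
      congr 1
      exact x.1.1.2 i j
    · intro x y hxy
      apply Subtype.ext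
      apply Subtype.ext
      apply Subtype.ext
      refine restr_inj A _ _ x.2.2 y.2.2 ?_ ?_
      · intro i
        exact congrFun (congrArg (fun t => t.1.1) hxy) i
      · intro i
        exact congrFun (congrArg (fun t => t.2.1) hxy) i
  · have : IsEmpty {x : NT m p α // (A.card ≠ 0 ∧ A.card ≠ Fintype.card α) ∧
        ∀ i a, x.1.1 i a ∈ A ↔ a ∈ A} := ⟨fun x => hA x.2.1⟩
    exact (Nat.card_of_isEmpty).le

open Classical in
lemma hc_le' (m : ℕ) (p : Fin m → ℕ) (hm : 0 < m) (α : Type) [Fintype α] :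
    Nat.card (Tup m p α) ≤ ∑ k ∈ Finset.range (Fintype.card α + 1), (Fintype.card α).choose k *
      (gc m p k * ∏ i, wc (p i) (Fintype.card α - k)) := by
  refine union_bound (X := Tup m p α) (fun A x => ∀ i a, a ∈ A ↔ (x.1 i ^ p i) a ≠ a)
    (fun x => ⟨Finset.univ.filter (fun a => (x.1 ⟨0, hm⟩ ^ p ⟨0, hm⟩) a ≠ a), fun i a => ?_⟩)
    (fun k => gc m p k * ∏ i, wc (p i) (Fintype.card α - k)) ?_
  · rw [x.2 i ⟨0, hm⟩]; simp
  intro A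
  have e1 : gc m p A.card = Nat.card (GTup m p {a // a ∈ A}) := by rw [gc_eq]; simp
  have e2 : ∏ i, wc (p i) (Fintype.card α - A.card)
      = Nat.card (∀ i : Fin m, {x : Perm {a // a ∉ A} // x ^ p i = 1}) := by
    rw [Nat.card_pi]
    refine Finset.prod_congr rfl fun i _ => ?_
    rw [wc_eq, card_compl]
  have inv : ∀ x : {x : Tup m p α // ∀ i a, a ∈ A ↔ (x.1 i ^ p i) a ≠ a},
      ∀ i a, x.1.1 i a ∈ A ↔ a ∈ A := by
    intro x i a
    rw [x.2 i, x.2 i, ← Perm.mul_apply, ← pow_succ, pow_succ', Perm.mul_apply]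
    exact not_congr (x.1.1 i).injective.eq_iff
  rw [e1, e2, ← Nat.card_prod]
  refine Nat.card_le_card_of_injective (fun x =>
    (⟨fun i => (x.1.1 i).subtypePerm (inv x i), fun i j => ?_, fun i a => ?_⟩,
       fun i => ⟨(x.1.1 i).subtypePerm (fun a => not_congr (inv x i a)), ?_⟩)) ?_
  · rw [Perm.subtypePerm_pow, Perm.subtypePerm_pow]
    congr 1
    exact x.1.2 i j
  · rw [Perm.subtypePerm_pow]
    intro h
    exact (x.2 i a.1).1 a.2 (congrArg Subtype.val h)
  · rw [Perm.subtypePerm_pow]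
    ext a
    have := (x.2 i a.1).not.1 a.2
    rw [not_not] at this
    simpa using this
  · intro x y hxy
    apply Subtype.ext
    apply Subtype.ext
    refine restr_inj A _ _ (inv x) (inv y) ?_ ?_
    · intro i
      exact congrFun (congrArg (fun t => t.1.1) hxy) i
    · intro i
      exact congrArg Subtype.val (congrFun (congrArg (fun t => t.2) hxy) i)

lemma hc_le (m : ℕ) (p : Fin m → ℕ) (hm : 0 < m) (n : ℕ) :
    hc m p n ≤ ∑ k ∈ Finset.range (n + 1), n.choose k *
      (gc m p k * ∏ i, wc (p i) (n - k)) := by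
  have := hc_le' m p hm (Fin n)
  simpa [hc] using this

lemma le_hc (m : ℕ) (p : Fin m → ℕ) (n : ℕ) : ∏ i, wc (p i) n ≤ hc m p n := by
  have e2 : ∏ i, wc (p i) n
      = Nat.card (∀ i : Fin m, {x : Perm (Fin n) // x ^ p i = 1}) := by
    rw [Nat.card_pi]; rfl
  rw [e2]
  refine Nat.card_le_card_of_injective
    (fun x => ⟨fun i => (x i).1, fun i j => by rw [(x i).2, (x j).2]⟩) ?_
  intro x y h
  funext i
  exact Subtype.ext (congrFun (congrArg Subtype.val h) i)

lemma gc_le' (m : ℕ) (p : Fin m → ℕ) (hm : 0 < m) (α : Type) [Fintype α] (M : ℝ) (hM0 : 0 ≤ M)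
    (hM : ∀ c, 2 * c ≤ Fintype.card α → (∏ i, (wc (p i) c : ℝ)) ≤ M * c.factorial) :
    (Nat.card (GTup m p α) : ℝ) ≤
      (2 ^ m * 4) ^ Fintype.card α * M * (Fintype.card α).factorial := by
  classical
  set s := Fintype.card α with hs
  have h1 : Nat.card (GTup m p α) ≤ Nat.card (Σ z : {z : Perm α // ∀ a, z a ≠ a},
      ∀ i : Fin m, {x : Perm α // x ^ p i = z.1}) := by
    refine Nat.card_le_card_of_injective
      (fun x => ⟨⟨x.1 ⟨0, hm⟩ ^ p ⟨0, hm⟩, x.2.2 _⟩, fun i => ⟨x.1 i, x.2.1 _ _⟩⟩) ?_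
    intro x y h
    apply Subtype.ext
    funext i
    exact congrArg (fun t : (Σ z : {z : Perm α // ∀ a, z a ≠ a},
      ∀ i : Fin m, {x : Perm α // x ^ p i = z.1}) => (t.2 i).1) h
  rw [Nat.card_sigma] at h1
  have h2 : ∀ z : {z : Perm α // ∀ a, z a ≠ a},
      (Nat.card (∀ i : Fin m, {x : Perm α // x ^ p i = z.1}) : ℝ) ≤
        ((2 ^ m) ^ s * M) * (s : ℝ) ^ cyc z.1 := by
    intro z
    rw [Nat.card_pi, Nat.cast_prod]
    have hc := two_cyc_le z.1 z.2
    rw [Nat.card_eq_fintype_card, ← hs] at hc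
    calc _ ≤ ∏ i : Fin m, ((2 : ℝ) ^ s * wc (p i) (cyc z.1)) := by
          refine Finset.prod_le_prod (fun i _ => by positivity) fun i _ => ?_
          have := roots_le (p i) z.1
          rw [Nat.card_eq_fintype_card (α := α), ← hs] at this
          exact_mod_cast this
      _ = (2 ^ m) ^ s * ∏ i : Fin m, (wc (p i) (cyc z.1) : ℝ) := by
          rw [Finset.prod_mul_distrib]
          simp [← pow_mul, mul_comm]
      _ ≤ (2 ^ m) ^ s * (M * (cyc z.1).factorial) := by
          gcongr
          exact hM _ hc
      _ ≤ (2 ^ m) ^ s * (M * (s : ℝ) ^ cyc z.1) := by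
          gcongr
          have h3 : (cyc z.1).factorial ≤ s ^ cyc z.1 :=
            (Nat.factorial_le_pow _).trans (Nat.pow_le_pow_left (by omega) _)
          exact_mod_cast h3
      _ = _ := by ring
  have h3 : ∑ z : {z : Perm α // ∀ a, z a ≠ a}, (s : ℝ) ^ cyc z.1 ≤ 4 ^ s * s.factorial := by
    calc _ = ∑ z ∈ Finset.univ.filter (fun z : Perm α => ∀ a, z a ≠ a), (s : ℝ) ^ cyc z := by
          exact (Finset.sum_subtype (Finset.univ.filter (fun z : Perm α => ∀ a, z a ≠ a))
            (by simp) (fun z => (s : ℝ) ^ cyc z)).symm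
      _ ≤ ∑ z : Perm α, (s : ℝ) ^ cyc z :=
          Finset.sum_le_sum_of_subset_of_nonneg (Finset.filter_subset _ _)
            (fun _ _ _ => by positivity)
      _ ≤ _ := by
          have := sum_pow_cyc α
          rw [← hs] at this
          convert (Nat.cast_le (α := ℝ)).2 this using 1 <;> push_cast <;> first | rfl | congr!
  calc (Nat.card (GTup m p α) : ℝ) ≤ ∑ z : {z : Perm α // ∀ a, z a ≠ a},
        (Nat.card (∀ i : Fin m, {x : Perm α // x ^ p i = z.1}) : ℝ) := by exact_mod_cast h1
    _ ≤ ∑ z : {z : Perm α // ∀ a, z a ≠ a}, ((2 ^ m) ^ s * M) * (s : ℝ) ^ cyc z.1 :=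
        Finset.sum_le_sum fun z _ => h2 z
    _ = ((2 ^ m) ^ s * M) * ∑ z : {z : Perm α // ∀ a, z a ≠ a}, (s : ℝ) ^ cyc z.1 := by
        rw [Finset.mul_sum]
    _ ≤ ((2 ^ m) ^ s * M) * (4 ^ s * s.factorial) := by gcongr
    _ = _ := by rw [mul_pow]; ring

lemma gc_le (m : ℕ) (p : Fin m → ℕ) (hm : 0 < m) (s : ℕ) (M : ℝ) (hM0 : 0 ≤ M)
    (hM : ∀ c, 2 * c ≤ s → (∏ i, (wc (p i) c : ℝ)) ≤ M * c.factorial) :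
    (gc m p s : ℝ) ≤ (2 ^ m * 4) ^ s * M * s.factorial := by
  have := gc_le' m p hm (Fin s) M hM0 (by simpa using hM)
  simpa [gc] using this

def homEquiv (m : ℕ) (p : Fin m → ℕ) (α : Type) :
    (TorusKnotGroup m p →* Perm α) ≃ Tup m p α where
  toFun φ := ⟨fun i => φ (PresentedGroup.of i), fun i j => by
    rw [← map_pow, ← map_pow]
    congr 1
    have : (PresentedGroup.mk (torusRels m p))
        (FreeGroup.of i ^ p i * (FreeGroup.of j ^ p j)⁻¹) = 1 :=
      PresentedGroup.one_of_mem ⟨i, j, rfl⟩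
    rw [map_mul, map_inv, mul_inv_eq_one, map_pow, map_pow] at this
    exact this⟩
  invFun x := PresentedGroup.toGroup (f := x.1) (by
    rintro r ⟨i, j, rfl⟩
    simp [x.2 i j])
  left_inv φ := by
    ext1 i
    simp
  right_inv x := by
    apply Subtype.ext
    funext i
    simp

lemma hom_count (m : ℕ) (p : Fin m → ℕ) (n : ℕ) :
    Nat.card (TorusKnotGroup m p →* Perm (Fin n)) = hc m p n :=
  Nat.card_congr (homEquiv m p (Fin n))

lemma hom_split (m : ℕ) (p : Fin m → ℕ) (n : ℕ) :
    hc m p n ≤ transitiveHomCount (TorusKnotGroup m p) n + Nat.card (NT m p (Fin n)) := by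
  classical
  have : Finite (TorusKnotGroup m p →* Perm (Fin n)) := Finite.of_equiv _ (homEquiv m p (Fin n)).symm
  have e := Nat.card_congr (Equiv.sumCompl
    (fun φ : TorusKnotGroup m p →* Perm (Fin n) => ∀ x y : Fin n, ∃ g, φ g x = y))
  rw [Nat.card_sum, hom_count] at e
  rw [← e]
  unfold transitiveHomCount
  gcongr
  refine Nat.card_le_card_of_injective (fun φ => ⟨homEquiv m p _ φ.1, ?_⟩) ?_
  · have hφ := φ.2
    push Not at hφ
    obtain ⟨x, y, hxy⟩ := hφ
    refine ⟨Finset.univ.filter (fun a => ∃ g, φ.1 g x = a), ⟨?_, ?_⟩, ?_⟩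
    · rw [Finset.card_ne_zero]
      exact ⟨x, by simpa using ⟨1, by simp⟩⟩
    · intro h
      rw [Finset.card_eq_iff_eq_univ] at h
      have : y ∈ Finset.univ.filter (fun a => ∃ g, φ.1 g x = a) := by rw [h]; simp
      simp only [Finset.mem_filter, Finset.mem_univ, true_and] at this
      obtain ⟨g, hg⟩ := this
      exact hxy g hg
    · intro i a
      simp only [Finset.mem_filter, Finset.mem_univ, true_and]
      change (∃ g, φ.1 g x = φ.1 (PresentedGroup.of i) a) ↔ _
      constructor
      · rintro ⟨g, hg⟩
        refine ⟨(PresentedGroup.of i)⁻¹ * g, ?_⟩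
        rw [map_mul, Perm.mul_apply, hg, map_inv]
        simp
      · rintro ⟨g, hg⟩
        refine ⟨PresentedGroup.of i * g, ?_⟩
        rw [map_mul, Perm.mul_apply, hg]
  · intro φ ψ h
    apply Subtype.ext
    exact (homEquiv m p _).injective (congrArg Subtype.val h)

lemma nt_le_fin (m : ℕ) (p : Fin m → ℕ) (n : ℕ) :
    Nat.card (NT m p (Fin n)) ≤ ∑ k ∈ Finset.range (n + 1), n.choose k *
      (if k ≠ 0 ∧ k ≠ n then hc m p k * hc m p (n - k) else 0) := by
  have := nt_le m p (Fin n)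
  simpa only [Fintype.card_fin] using this

lemma tr_le_hc (m : ℕ) (p : Fin m → ℕ) (n : ℕ) :
    transitiveHomCount (TorusKnotGroup m p) n ≤ hc m p n := by
  rw [← hom_count]
  have : Finite (TorusKnotGroup m p →* Perm (Fin n)) := Finite.of_equiv _ (homEquiv m p (Fin n)).symm
  exact Nat.card_le_card_of_injective _ Subtype.val_injective

end TK
namespace TK
open Equiv

lemma two_pow_le_choose (k : ℕ) : ∀ l, k ≤ l → 2 ^ k ≤ (k + l).choose k := by
  induction k with
  | zero => intro l _; simp
  | succ k ih =>
    intro l hl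
    obtain ⟨l, rfl⟩ : ∃ l', l = l' + 1 := ⟨l - 1, by omega⟩
    have h0 := ih l (by omega)
    have h1 : (k + l).choose k ≤ (k + l + 1).choose k := Nat.choose_le_choose _ (by omega)
    have h2 : (k + l).choose k ≤ (k + l + 1).choose (k + 1) := by
      rw [Nat.choose_succ_succ]; omega
    have e : (k + 1 + (l + 1)).choose (k + 1) = (k + l + 1).choose k + (k + l + 1).choose (k + 1) := by
      rw [show k + 1 + (l + 1) = (k + l + 1) + 1 by ring, Nat.choose_succ_succ]
    rw [e, pow_succ]
    omega

lemma add_le_choose (k l : ℕ) : k + 1 + (l + 1) ≤ (k + 1 + (l + 1)).choose (k + 1) := by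
  induction l with
  | zero => simp
  | succ l ih =>
    have e : (k + 1 + (l + 1 + 1)).choose (k + 1)
        = (k + 1 + (l + 1)).choose k + (k + 1 + (l + 1)).choose (k + 1) := by
      rw [show k + 1 + (l + 1 + 1) = (k + 1 + (l + 1)) + 1 by ring, Nat.choose_succ_succ]
    have : 0 < (k + 1 + (l + 1)).choose k := Nat.choose_pos (by omega)
    omega

lemma choose_term (δ : ℝ) (hδ : 0 < δ) (n k : ℕ) (hk0 : 0 < k) (hkn : k < n) :
    ((n.choose k : ℝ) ^ δ)⁻¹ ≤ ((n : ℝ) ^ (δ / 2))⁻¹ *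
      (((2 : ℝ) ^ (δ / 2))⁻¹ ^ k + ((2 : ℝ) ^ (δ / 2))⁻¹ ^ (n - k)) := by
  have hr : 0 < (2 : ℝ) ^ (δ / 2) := by positivity
  have hn : (0 : ℝ) < n := by exact_mod_cast (by omega : 0 < n)
  have hmin : ((2 : ℝ) ^ (δ / 2))⁻¹ ^ (min k (n - k)) ≤
      ((2 : ℝ) ^ (δ / 2))⁻¹ ^ k + ((2 : ℝ) ^ (δ / 2))⁻¹ ^ (n - k) := by
    rcases min_choice k (n - k) with h | h <;> rw [h]
    · have : 0 ≤ ((2 : ℝ) ^ (δ / 2))⁻¹ ^ (n - k) := by positivity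
      linarith
    · have : 0 ≤ ((2 : ℝ) ^ (δ / 2))⁻¹ ^ k := by positivity
      linarith
  have c1 : (n : ℝ) ≤ n.choose k := by
    have := add_le_choose (k - 1) (n - k - 1)
    rw [show k - 1 + 1 + (n - k - 1 + 1) = n by omega, show k - 1 + 1 = k by omega] at this
    exact_mod_cast this
  have c2 : (2 : ℝ) ^ (min k (n - k)) ≤ n.choose k := by
    rcases le_total k (n - k) with h | h
    · rw [min_eq_left h]
      have := two_pow_le_choose k (n - k) h
      rw [show k + (n - k) = n by omega] at this
      exact_mod_cast this
    · rw [min_eq_right h]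
      have := two_pow_le_choose (n - k) k h
      rw [show n - k + k = n by omega, Nat.choose_symm hkn.le] at this
      exact_mod_cast this
  have hC : (0 : ℝ) < n.choose k := lt_of_lt_of_le hn c1
  have e : (n.choose k : ℝ) ^ δ = (n.choose k : ℝ) ^ (δ / 2) * (n.choose k : ℝ) ^ (δ / 2) := by
    rw [← Real.rpow_add hC]; congr 1; ring
  have e2 : ((2 : ℝ) ^ (δ / 2)) ^ (min k (n - k)) = ((2 : ℝ) ^ (min k (n - k))) ^ (δ / 2) := by
    rw [← Real.rpow_natCast, ← Real.rpow_natCast, ← Real.rpow_mul (by norm_num),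
      ← Real.rpow_mul (by norm_num), mul_comm]
  refine le_trans ?_ (mul_le_mul_of_nonneg_left hmin (by positivity))
  rw [e, inv_pow, e2, ← mul_inv]
  gcongr

noncomputable def SS (δ : ℝ) (n : ℕ) : ℝ :=
  ∑ k ∈ Finset.range (n + 1), if k ≠ 0 ∧ k ≠ n then ((n.choose k : ℝ) ^ δ)⁻¹ else 0

lemma SS_tendsto (δ : ℝ) (hδ : 0 < δ) : Tendsto (SS δ) atTop (𝓝 0) := by
  set r : ℝ := ((2 : ℝ) ^ (δ / 2))⁻¹ with hr
  have hr0 : 0 < r := by positivity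
  have hr1 : r < 1 := by
    rw [hr]
    apply inv_lt_one_of_one_lt₀
    exact Real.one_lt_rpow (by norm_num) (by positivity)
  have hgeo : ∀ n : ℕ, ∑ k ∈ Finset.range (n + 1), r ^ k ≤ (1 - r)⁻¹ := by
    intro n
    rw [← tsum_geometric_of_lt_one hr0.le hr1]
    exact (summable_geometric_of_lt_one hr0.le hr1).sum_le_tsum _ (fun _ _ => by positivity)
  have hb : ∀ n : ℕ, SS δ n ≤ ((n : ℝ) ^ (δ / 2))⁻¹ * ((1 - r)⁻¹ + (1 - r)⁻¹) := by
    intro n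
    calc SS δ n ≤ ∑ k ∈ Finset.range (n + 1), ((n : ℝ) ^ (δ / 2))⁻¹ * (r ^ k + r ^ (n - k)) := by
          refine Finset.sum_le_sum fun k hk => ?_
          rw [Finset.mem_range] at hk
          split_ifs with h
          · exact choose_term δ hδ n k (by omega) (by omega)
          · positivity
      _ = ((n : ℝ) ^ (δ / 2))⁻¹ * (∑ k ∈ Finset.range (n + 1), r ^ k
            + ∑ k ∈ Finset.range (n + 1), r ^ k) := by
          rw [← Finset.mul_sum, Finset.sum_add_distrib]
          congr 2
          rw [← Finset.sum_range_reflect]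
          refine Finset.sum_congr rfl fun k hk => ?_
          rw [Finset.mem_range] at hk
          congr 1
          omega
      _ ≤ _ := by
          gcongr
          · exact hgeo n
          · exact hgeo n
  refine squeeze_zero (g := fun n : ℕ => ((n : ℝ) ^ (δ / 2))⁻¹ * ((1 - r)⁻¹ + (1 - r)⁻¹))
    (fun n => ?_) hb ?_
  · refine Finset.sum_nonneg fun k _ => ?_
    split_ifs <;> positivity
  · have h1 : Tendsto (fun n : ℕ => (n : ℝ) ^ (δ / 2)) atTop atTop :=
      (tendsto_rpow_atTop (by positivity)).comp tendsto_natCast_atTop_atTop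
    have := h1.inv_tendsto_atTop.mul_const ((1 - r)⁻¹ + (1 - r)⁻¹)
    simpa using this

lemma growth (a : ℕ → ℝ) (ha : ∀ n, 0 < a n) (δ K : ℝ) (hδ : 0 < δ) (hK : 0 < K)
    (h : ∀ k l, a k * a l * ((k + l).choose k : ℝ) ^ δ ≤ K * a (k + l)) (D : ℝ) (hD : 0 < D) :
    ∃ c, 0 < c ∧ ∀ j, c * D ^ j ≤ a j := by
  have h1 : Tendsto (fun n : ℕ => ((n : ℝ) + 1) ^ δ) atTop atTop :=
    (tendsto_rpow_atTop hδ).comp (tendsto_atTop_add_const_right _ _ tendsto_natCast_atTop_atTop)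
  obtain ⟨N, hN⟩ := (tendsto_atTop.1 h1 (D * K / a 1)).exists_forall_of_atTop
  obtain ⟨j0, _, hj0⟩ := Finset.exists_min_image (Finset.range (N + 1)) (fun j => a j / D ^ j)
    ⟨0, by simp⟩
  refine ⟨a j0 / D ^ j0, div_pos (ha _) (by positivity), fun j => ?_⟩
  rcases le_total j N with hj | hj
  · have := hj0 j (by simp; omega)
    rwa [le_div_iff₀ (by positivity)] at this
  · induction j, hj using Nat.le_induction with
    | base =>
      have := hj0 N (by simp)
      rwa [le_div_iff₀ (by positivity)] at this
    | succ j hj ih =>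
      have h2 := h 1 j
      have h3 := hN j hj
      rw [div_le_iff₀ (ha 1)] at h3
      have e : (((1 + j).choose 1 : ℕ) : ℝ) = (j : ℝ) + 1 := by
        rw [Nat.choose_one_right]; push_cast; ring
      rw [e, add_comm 1 j] at h2
      have h4 : D * K * a j ≤ K * a (j + 1) := by
        refine le_trans ?_ h2
        have := mul_le_mul_of_nonneg_right h3 (ha j).le
        linarith
      have h5 : D * a j ≤ a (j + 1) := by
        refine le_of_mul_le_mul_left ?_ hK
        linarith
      rw [pow_succ]
      have := mul_le_mul_of_nonneg_left ih hD.le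
      linarith

lemma choose_pow_ge_one (δ : ℝ) (hδ : 0 < δ) (k l : ℕ) : 1 ≤ ((k + l).choose k : ℝ) ^ δ := by
  apply Real.one_le_rpow _ hδ.le
  exact_mod_cast Nat.choose_pos (by omega)

lemma abstract_main (a H G T : ℕ → ℝ) (ha : ∀ n, 0 < a n) (δ K B : ℝ) (hδ : 0 < δ) (hK : 0 < K)
    (hB : 1 ≤ B)
    (h : ∀ k l, a k * a l * ((k + l).choose k : ℝ) ^ δ ≤ K * a (k + l))
    (hG : ∀ s M, 0 ≤ M → (∀ c, 2 * c ≤ s → a c ≤ M) → G s ≤ B ^ s * M)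
    (hH : ∀ n, H n ≤ ∑ k ∈ Finset.range (n + 1), G k * a (n - k))
    (haH : ∀ n, a n ≤ H n)
    (hTH : ∀ n, T n ≤ H n)
    (hHT : ∀ n, H n ≤ T n + ∑ k ∈ Finset.range (n + 1),
      if k ≠ 0 ∧ k ≠ n then H k * H (n - k) else 0) :
    Tendsto (fun n => H n / T n) atTop (𝓝 1) := by
  have h' : ∀ k l, a k * a l ≤ K * a (k + l) := fun k l => by
    refine le_trans ?_ (h k l)
    have := choose_pow_ge_one δ hδ k l
    exact le_mul_of_one_le_right (mul_pos (ha _) (ha _)).le this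
  obtain ⟨c, hc, hgr⟩ := growth a ha δ K hδ hK h ((2 * B) ^ 2) (by positivity)
  have g1 : ∀ s, G s ≤ K / c * a s * (1 / 2) ^ s := by
    intro s
    have hM : ∀ j, 2 * j ≤ s → a j ≤ K / c * a s / (2 * B) ^ s := by
      intro j hj
      have h1 := h' j (s - j)
      rw [show j + (s - j) = s by omega] at h1
      have h2 : c * (2 * B) ^ s ≤ a (s - j) := by
        refine le_trans ?_ (hgr (s - j))
        rw [← pow_mul]
        gcongr
        · linarith
        · omega
      have h3 : a j * (c * (2 * B) ^ s) ≤ K * a s :=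
        (mul_le_mul_of_nonneg_left h2 (ha j).le).trans h1
      rw [le_div_iff₀ (by positivity), div_mul_eq_mul_div, le_div_iff₀ hc]
      linarith
    refine (hG s _ ?_ hM).trans (le_of_eq ?_)
    · have := ha s; positivity
    · rw [mul_pow, div_pow, one_pow]
      have : B ^ s ≠ 0 := by positivity
      field_simp
  have hKc : 0 < K / c := by positivity
  have g2 : ∀ n, H n ≤ 2 * (K / c) * K * a n := by
    intro n
    refine (hH n).trans ?_
    calc _ ≤ ∑ k ∈ Finset.range (n + 1), (K / c * K * a n) * (1 / 2) ^ k := by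
          refine Finset.sum_le_sum fun k hk => ?_
          rw [Finset.mem_range] at hk
          have h1 := h' k (n - k)
          rw [show k + (n - k) = n by omega] at h1
          have h2 := mul_le_mul_of_nonneg_right (g1 k) (ha (n - k)).le
          have h3 := mul_le_mul_of_nonneg_left h1 (by positivity : 0 ≤ K / c * (1 / 2) ^ k)
          linarith
      _ = (K / c * K * a n) * ∑ k ∈ Finset.range (n + 1), (1 / 2) ^ k := by rw [Finset.mul_sum]
      _ ≤ (K / c * K * a n) * 2 := by
          have := ha n
          gcongr
          exact sum_geometric_two_le _
      _ = _ := by ring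
  set L := 2 * (K / c) * K with hL
  have hL0 : 0 < L := by positivity
  clear_value L
  have hHpos : ∀ n, 0 < H n := fun n => (ha n).trans_le (haH n)
  have g3 : ∀ n, H n ≤ T n + L ^ 2 * K * a n * SS δ n := by
    intro n
    refine (hHT n).trans ?_
    rw [SS, Finset.mul_sum]
    gcongr with k hk
    rw [Finset.mem_range] at hk
    split_ifs with hh
    · have h1 := h k (n - k)
      rw [show k + (n - k) = n by omega] at h1
      have hC : 0 < (n.choose k : ℝ) ^ δ := by
        have : 0 < n.choose k := Nat.choose_pos (by omega)
        positivity
      have h2 : a k * a (n - k) ≤ K * a n * ((n.choose k : ℝ) ^ δ)⁻¹ := by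
        rw [← div_eq_mul_inv, le_div_iff₀ hC]
        exact h1
      calc H k * H (n - k) ≤ (L * a k) * (L * a (n - k)) :=
            mul_le_mul (g2 _) (g2 _) (hHpos _).le (mul_pos hL0 (ha _)).le
        _ = L ^ 2 * (a k * a (n - k)) := by ring
        _ ≤ L ^ 2 * (K * a n * ((n.choose k : ℝ) ^ δ)⁻¹) := by gcongr
        _ = _ := by ring
    · simp
  have hSS0 : ∀ n, 0 ≤ SS δ n := fun n => by
    refine Finset.sum_nonneg fun k _ => ?_
    split_ifs <;> positivity
  have lim : Tendsto (fun n => T n / H n) atTop (𝓝 1) := by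
    have l1 : Tendsto (fun n => 1 - L ^ 2 * K * SS δ n) atTop (𝓝 1) := by
      have := ((SS_tendsto δ hδ).const_mul (L ^ 2 * K)).const_sub 1
      simpa using this
    refine tendsto_of_tendsto_of_tendsto_of_le_of_le l1 tendsto_const_nhds (fun n => ?_) (fun n => ?_)
    · change _ ≤ T n / H n
      rw [le_div_iff₀ (hHpos n)]
      have h1 := g3 n
      have h2 : L ^ 2 * K * a n * SS δ n ≤ L ^ 2 * K * H n * SS δ n := by
        have := hSS0 n
        gcongr
        exact haH n
      linarith
    · exact (div_le_one (hHpos n)).2 (hTH n)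
  have := lim.inv₀ one_ne_zero
  simpa using this

noncomputable def aa (m : ℕ) (p : Fin m → ℕ) (n : ℕ) : ℝ := (∏ i, (wc (p i) n : ℝ)) / n.factorial

lemma aa_pos (m : ℕ) (p : Fin m → ℕ) (n : ℕ) : 0 < aa m p n := by
  unfold aa
  have : 0 < ∏ i, (wc (p i) n : ℝ) := Finset.prod_pos fun i _ => by exact_mod_cast wc_pos _ _
  positivity

lemma aa_key (m : ℕ) (p : Fin m → ℕ) (hp : ∀ i, 2 ≤ p i)
    (h : ∑ i, (1 : ℝ) / (p i : ℝ) < (m : ℝ) - 1) :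
    ∃ δ K : ℝ, 0 < δ ∧ 0 < K ∧
      ∀ k l, aa m p k * aa m p l * ((k + l).choose k : ℝ) ^ δ ≤ K * aa m p (k + l) := by
  set σ := ∑ i, (1 : ℝ) / (p i : ℝ) with hσ
  have hσ0 : 0 ≤ σ := Finset.sum_nonneg fun i _ => by positivity
  obtain ⟨η, hη, hη1, hησ⟩ : ∃ η : ℝ, 0 < η ∧ η ≤ 1 ∧ (1 + η) * σ < m - 1 := by
    refine ⟨min 1 (((m : ℝ) - 1 - σ) / (2 * (σ + 1))), ?_, min_le_left _ _, ?_⟩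
    · apply lt_min one_pos
      apply div_pos <;> linarith
    · have h1 : min 1 (((m : ℝ) - 1 - σ) / (2 * (σ + 1))) * (2 * (σ + 1)) ≤ (m : ℝ) - 1 - σ := by
        rw [← le_div_iff₀ (by positivity)]; exact min_le_right _ _
      have h2 : 0 < min 1 (((m : ℝ) - 1 - σ) / (2 * (σ + 1))) := by
        apply lt_min one_pos
        apply div_pos <;> linarith
      nlinarith
  choose Kf hKf0 hKf using fun i => key (p i) (hp i) η hη hη1
  refine ⟨m - 1 - (1 + η) * σ, ∏ i, Kf i, by linarith, Finset.prod_pos fun i _ => hKf0 i, ?_⟩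
  intro k l
  have eaa : ∀ n, aa m p n = (n.factorial : ℝ) ^ m * (∏ i, vv (p i) n) / n.factorial := by
    intro n
    unfold aa
    congr 1
    have : (n.factorial : ℝ) ^ m = ∏ i : Fin m, (n.factorial : ℝ) := by simp
    rw [this, ← Finset.prod_mul_distrib]
    refine Finset.prod_congr rfl fun i _ => ?_
    unfold vv
    have : (n.factorial : ℝ) ≠ 0 := by positivity
    field_simp
  set C : ℝ := ((k + l).choose k : ℝ) with hC
  have hC0 : 0 < C := by
    have : 0 < (k + l).choose k := Nat.choose_pos (by omega)
    rw [hC]; exact_mod_cast this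
  have hfac : ((k + l).factorial : ℝ) = C * (k.factorial * l.factorial) := by
    rw [hC]
    have := Nat.add_choose_mul_factorial_mul_factorial k l
    rw [← Nat.choose_symm_add] at this
    rw [← mul_assoc]
    exact_mod_cast this.symm
  have hprod : (∏ i, vv (p i) k) * (∏ i, vv (p i) l) ≤
      (∏ i, Kf i) * C ^ ((1 + η) * σ) * ∏ i, vv (p i) (k + l) := by
    have e1 : C ^ ((1 + η) * σ) = ∏ i, C ^ ((1 + η) / (p i : ℝ)) := by
      rw [← Real.rpow_sum_of_pos hC0]
      congr 1
      rw [hσ, Finset.mul_sum]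
      refine Finset.sum_congr rfl fun i _ => by ring
    rw [e1, ← Finset.prod_mul_distrib, ← Finset.prod_mul_distrib, ← Finset.prod_mul_distrib]
    refine Finset.prod_le_prod (fun i _ => (mul_pos (vv_pos _ _) (vv_pos _ _)).le) fun i _ => ?_
    exact hKf i k l
  rw [eaa, eaa, eaa, hfac]
  have eC : C ^ ((m : ℝ) - 1 - (1 + η) * σ) = C ^ m / C / C ^ ((1 + η) * σ) := by
    rw [Real.rpow_sub hC0, Real.rpow_sub hC0, Real.rpow_natCast, Real.rpow_one]
  rw [eC]
  set P := C ^ ((1 + η) * σ) with hP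
  have hP0 : 0 < P := by positivity
  have hk : (0 : ℝ) < k.factorial := by positivity
  have hl : (0 : ℝ) < l.factorial := by positivity
  clear_value P C
  set u : ℝ := (k.factorial : ℝ)
  set w : ℝ := (l.factorial : ℝ)
  clear_value u w
  set V1 := ∏ i, vv (p i) k
  set V2 := ∏ i, vv (p i) l
  set V3 := ∏ i, vv (p i) (k + l)
  set KK := ∏ i, Kf i
  clear_value V1 V2 V3 KK
  have q : 0 ≤ (u * w * C) ^ m / (u * w * C * P) := by positivity
  have := mul_le_mul_of_nonneg_left hprod q
  calc _ = (u * w * C) ^ m / (u * w * C * P) * (V1 * V2) := by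
        rw [mul_pow, mul_pow]; field_simp
    _ ≤ _ := this
    _ = _ := by
        rw [mul_pow, mul_pow, mul_pow, mul_pow]; field_simp

end TK

theorem hom_count_transitive_comparison (m : ℕ) (p : Fin m → ℕ) (hp : ∀ i, 2 ≤ p i)
    (h : ∑ i, (1 : ℝ) / (p i : ℝ) < (m : ℝ) - 1) :
    Filter.Tendsto (fun n : ℕ =>
      (Nat.card (TorusKnotGroup m p →* Equiv.Perm (Fin n)) : ℝ) /
        (transitiveHomCount (TorusKnotGroup m p) n : ℝ))
      Filter.atTop (𝓝 1) := by
  have hm : 0 < m := by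
    rcases Nat.eq_zero_or_pos m with rfl | hm
    · simp at h; linarith
    · exact hm
  obtain ⟨δ, K, hδ, hK, hkey⟩ := TK.aa_key m p hp h
  have main := TK.abstract_main (TK.aa m p) (fun n => (TK.hc m p n : ℝ) / n.factorial)
    (fun n => (TK.gc m p n : ℝ) / n.factorial)
    (fun n => (transitiveHomCount (TorusKnotGroup m p) n : ℝ) / n.factorial)
    (TK.aa_pos m p) δ K (2 ^ m * 4) hδ hK ?_ hkey ?_ ?_ ?_ ?_ ?_
  · refine main.congr fun n => ?_
    have : (n.factorial : ℝ) ≠ 0 := by positivity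
    rw [TK.hom_count, div_div_div_cancel_right₀ this]
  · have : (1 : ℝ) ≤ 2 ^ m := one_le_pow₀ (by norm_num)
    linarith
  · intro s M hM0 hM
    have hs : (0 : ℝ) < s.factorial := by positivity
    rw [div_le_iff₀ hs]
    refine TK.gc_le m p hm s M hM0 fun c hc => ?_
    have := hM c hc
    rwa [TK.aa, div_le_iff₀ (by positivity)] at this
  · intro n
    rw [div_le_iff₀ (by positivity)]
    have := TK.hc_le m p hm n
    have h2 : (TK.hc m p n : ℝ) ≤ ∑ k ∈ Finset.range (n + 1), (n.choose k : ℝ) *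
      ((TK.gc m p k : ℝ) * ∏ i, (TK.wc (p i) (n - k) : ℝ)) := by exact_mod_cast this
    refine h2.trans (le_of_eq ?_)
    rw [Finset.sum_mul]
    refine Finset.sum_congr rfl fun k hk => ?_
    rw [Finset.mem_range] at hk
    rw [TK.aa, Nat.cast_choose ℝ (by omega : k ≤ n)]
    field_simp
  · intro n
    unfold TK.aa
    gcongr
    exact_mod_cast TK.le_hc m p n
  · intro n
    beta_reduce
    gcongr
    exact TK.tr_le_hc m p n
  · intro n
    beta_reduce
    rw [div_le_iff₀ (by positivity), add_mul, div_mul_cancel₀ _ (by positivity), Finset.sum_mul]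
    have := (TK.hom_split m p n).trans (Nat.add_le_add_left (TK.nt_le_fin m p n) _)
    have h2 : (TK.hc m p n : ℝ) ≤ (transitiveHomCount (TorusKnotGroup m p) n : ℝ) +
      ∑ k ∈ Finset.range (n + 1), (n.choose k : ℝ) *
      (if k ≠ 0 ∧ k ≠ n then (TK.hc m p k : ℝ) * TK.hc m p (n - k) else 0) := by exact_mod_cast this
    refine h2.trans (le_of_eq ?_)
    congr 1
    refine Finset.sum_congr rfl fun k hk => ?_
    rw [Finset.mem_range] at hk
    split_ifs
    · rw [Nat.cast_choose ℝ (by omega : k ≤ n)]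
      field_simp
    · simp
end
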